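/- arXiv:2011.13977 — 5 statements merged into one kernel-verified Lean document; each statement's English description precedes it below -/
import Mathlib

section
/- Let I be an instance with n ≥ 8 agents and n objects and let v be a unit-sum valuation profile consistent with I. Set t_1 = 1/n^{1/3} and t_i = 1/(min{i, n^{1/3}}·n^{2/3}) for 2 ≤ i ≤ n, and set k = ⌊n^{1/3}/2⌋. Let μ_MM be obtained from a maximum-weight matching of G_I under the weights assigning to each edge e = (a_i, h_j) of rank r the weight t_r if v_i(h_j) ≥ t_r and 0 otherwise, by deleting all edges of weight 0. Let μ'_aux be a matching of G_I containing the maximum possible number of edges of rank at most k, let X' be the set of edges of μ'_aux of rank at most k, and let μ_aux be the set of edges (a, h) of μ'_aux such that neither a nor h occurs in an edge of μ_MM. If μ_MM contains no rank-1 edge, then SW(μ_MM | v) + SW(μ_aux | v) ≥ |X'|/(2n). -/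
open Finset
open scoped Classical

/-- A one-sided matching instance with `n` agents and `n` objects.  Agent `i` has a
nonempty acceptable set `accept i` and a weak order `pref i` on it
(`pref i h h'` means agent `i` weakly prefers object `h` to object `h'`). -/
structure OSMInstance (n : ℕ) where
  accept : Fin n → Finset (Fin n)
  accept_nonempty : ∀ i, (accept i).Nonempty
  pref : Fin n → Fin n → Fin n → Prop
  pref_refl : ∀ i h, h ∈ accept i → pref i h h
  pref_trans : ∀ i h₁ h₂ h₃, h₁ ∈ accept i → h₂ ∈ accept i → h₃ ∈ accept i →
    pref i h₁ h₂ → pref i h₂ h₃ → pref i h₁ h₃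
  pref_total : ∀ i h₁ h₂, h₁ ∈ accept i → h₂ ∈ accept i → pref i h₁ h₂ ∨ pref i h₂ h₁

namespace OSMInstance

variable {n : ℕ}

/-- Agent `i` strictly prefers object `h` to object `h'`. -/
def strictPref (I : OSMInstance n) (i h h' : Fin n) : Prop :=
  I.pref i h h' ∧ ¬ I.pref i h' h

/-- The rank of the edge `(i, h)` of `G_I`: one plus the number of acceptable objects
that agent `i` strictly prefers to `h`. -/
noncomputable def edgeRank (I : OSMInstance n) (e : Fin n × Fin n) : ℕ :=
  ((I.accept e.1).filter (fun h' => I.strictPref e.1 h' e.2)).card + 1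

/-- A matching of `G_I`: a set of acceptable (agent, object) pairs in which every agent
and every object occurs at most once. -/
def IsMatching (I : OSMInstance n) (μ : Finset (Fin n × Fin n)) : Prop :=
  (∀ e ∈ μ, e.2 ∈ I.accept e.1) ∧
  (∀ e ∈ μ, ∀ e' ∈ μ, e.1 = e'.1 → e = e') ∧
  (∀ e ∈ μ, ∀ e' ∈ μ, e.2 = e'.2 → e = e')

/-- Total weight of a set of edges under the edge weights `w`. -/
def weightSum (w : Fin n × Fin n → ℝ) (μ : Finset (Fin n × Fin n)) : ℝ :=
  ∑ e ∈ μ, w e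

/-- Social welfare of the set of edges `μ` under the valuation profile `v`. -/
def SW (_I : OSMInstance n) (v : Fin n → Fin n → ℝ) (μ : Finset (Fin n × Fin n)) : ℝ :=
  ∑ e ∈ μ, v e.1 e.2

/-- `μ` is a maximum-weight matching of `G_I` with respect to edge weights `w`. -/
def IsMaxWeightMatching (I : OSMInstance n) (w : Fin n × Fin n → ℝ)
    (μ : Finset (Fin n × Fin n)) : Prop :=
  I.IsMatching μ ∧ ∀ μ', I.IsMatching μ' → weightSum w μ' ≤ weightSum w μ

/-- `μ` is a priority-`p` matching: a maximum-weight matching when every rank-`r` edge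
gets weight `p r`. -/
noncomputable def IsPriorityMatching (I : OSMInstance n) (p : ℕ → ℝ)
    (μ : Finset (Fin n × Fin n)) : Prop :=
  I.IsMaxWeightMatching (fun e => p (I.edgeRank e)) μ

/-- `v` is a valuation profile consistent with the instance: values lie in `[0,1]`,
unacceptable objects have value `0`, and on acceptable objects the values represent
the weak order. -/
def Consistent (I : OSMInstance n) (v : Fin n → Fin n → ℝ) : Prop :=
  (∀ i h, 0 ≤ v i h ∧ v i h ≤ 1) ∧
  (∀ i h, h ∉ I.accept i → v i h = 0) ∧
  (∀ i h h', h ∈ I.accept i → h' ∈ I.accept i → (I.pref i h h' ↔ v i h' ≤ v i h))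

/-- Unit-sum valuations: each agent's values over acceptable objects sum to `1`. -/
def UnitSum (I : OSMInstance n) (v : Fin n → Fin n → ℝ) : Prop :=
  ∀ i, ∑ h ∈ I.accept i, v i h = 1

/-- Unit-range valuations: each agent values some acceptable object `1`, some
acceptable object `0`, and has two non-equivalent acceptable objects. -/
def UnitRange (I : OSMInstance n) (v : Fin n → Fin n → ℝ) : Prop :=
  ∀ i, (∃ h ∈ I.accept i, v i h = 1) ∧ (∃ h ∈ I.accept i, v i h = 0) ∧
    ∃ h ∈ I.accept i, ∃ h' ∈ I.accept i, I.strictPref i h h'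

/-- Agent `i` is unmatched in `μ`. -/
def Unmatched (_I : OSMInstance n) (μ : Finset (Fin n × Fin n)) (i : Fin n) : Prop :=
  ∀ h, (i, h) ∉ μ

/-- Agent `i` weakly prefers their allocation in `μ'` to their allocation in `μ`
(being unmatched is strictly worse than receiving any acceptable object). -/
def WeakImprove (I : OSMInstance n) (μ' μ : Finset (Fin n × Fin n)) (i : Fin n) : Prop :=
  I.Unmatched μ i ∨ ∃ h h', (i, h) ∈ μ ∧ (i, h') ∈ μ' ∧ I.pref i h' h

/-- Agent `i` strictly prefers their allocation in `μ'` to their allocation in `μ`. -/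
def StrictImprove (I : OSMInstance n) (μ' μ : Finset (Fin n × Fin n)) (i : Fin n) : Prop :=
  (I.Unmatched μ i ∧ ∃ h', (i, h') ∈ μ') ∨
    ∃ h h', (i, h) ∈ μ ∧ (i, h') ∈ μ' ∧ I.strictPref i h' h

/-- `μ` is a Pareto optimal matching of `G_I`. -/
def ParetoOptimal (I : OSMInstance n) (μ : Finset (Fin n × Fin n)) : Prop :=
  I.IsMatching μ ∧
    ¬ ∃ μ', I.IsMatching μ' ∧ (∀ i, I.WeakImprove μ' μ i) ∧ ∃ i, I.StrictImprove μ' μ i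

/-- `sig I μ r` is the number of rank-`r` edges of `μ` (as an integer). -/
noncomputable def sig (I : OSMInstance n) (μ : Finset (Fin n × Fin n)) (r : ℕ) : ℤ :=
  ((μ.filter (fun e => I.edgeRank e = r)).card : ℤ)

end OSMInstance

/-- Lexicographic comparison `f ≤ g` of the length-`len` tuples `(f 0, …, f (len-1))`
and `(g 0, …, g (len-1))`. -/
def LexLe (len : ℕ) (f g : ℕ → ℤ) : Prop :=
  (∀ j < len, f j = g j) ∨ ∃ j < len, (∀ i < j, f i = g i) ∧ f j < g j

namespace OSMInstance

variable {n : ℕ}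

/-- `μ` is a rank-maximal matching: it lexicographically maximizes `(s_1, …, s_n)`. -/
noncomputable def RankMaximal (I : OSMInstance n) (μ : Finset (Fin n × Fin n)) : Prop :=
  I.IsMatching μ ∧ ∀ μ', I.IsMatching μ' →
    LexLe n (fun j => I.sig μ' (j + 1)) (fun j => I.sig μ (j + 1))

/-- `μ` is a max-cardinality rank-maximal matching: it lexicographically maximizes
`(Σ_i s_i, s_1, …, s_n)`. -/
noncomputable def MaxCardRankMaximal (I : OSMInstance n) (μ : Finset (Fin n × Fin n)) : Prop :=
  I.IsMatching μ ∧ ∀ μ', I.IsMatching μ' →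
    LexLe (n + 1) (fun j => if j = 0 then (μ'.card : ℤ) else I.sig μ' j)
      (fun j => if j = 0 then (μ.card : ℤ) else I.sig μ j)

/-- `μ` is a fair matching: it lexicographically maximizes
`(Σ_i s_i, -s_n, -s_(n-1), …, -s_1)`. -/
noncomputable def FairMatching (I : OSMInstance n) (μ : Finset (Fin n × Fin n)) : Prop :=
  I.IsMatching μ ∧ ∀ μ', I.IsMatching μ' →
    LexLe (n + 1) (fun j => if j = 0 then (μ'.card : ℤ) else -I.sig μ' (n + 1 - j))
      (fun j => if j = 0 then (μ.card : ℤ) else -I.sig μ (n + 1 - j))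

end OSMInstance

/-- The priority vector for rank-maximal matchings: a rank-`r` edge gets weight
`n ^ (2 * (n - r + 1))`. -/
noncomputable def pRankMaximal (n : ℕ) : ℕ → ℝ :=
  fun r => (n : ℝ) ^ (2 * (n - r + 1))

/-- The priority vector for max-cardinality rank-maximal matchings: a rank-`r` edge gets
weight `n ^ (2 * n) + n ^ (2 * (n - r))`. -/
noncomputable def pMaxCardRankMaximal (n : ℕ) : ℕ → ℝ :=
  fun r => (n : ℝ) ^ (2 * n) + (n : ℝ) ^ (2 * (n - r))

/-- The priority vector for fair matchings: a rank-`r` edge gets weight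
`4 * n ^ (2 * n) - 2 * n ^ (r - 1)`. -/
noncomputable def pFairVec (n : ℕ) : ℕ → ℝ :=
  fun r => 4 * (n : ℝ) ^ (2 * n) - 2 * (n : ℝ) ^ (r - 1)

/-- The set `𝕡` of the three priority vectors of interest. -/
noncomputable def PrioritySet (n : ℕ) : Set (ℕ → ℝ) :=
  {pRankMaximal n, pMaxCardRankMaximal n, pFairVec n}

/-- The four matching properties considered: Pareto optimal, rank-maximal,
max-cardinality rank-maximal, and fair. -/
inductive MatchProp where
  | po | rm | mcrm | fair

/-- `μ` satisfies the property `X` with respect to the instance `I`. -/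
noncomputable def SatisfiesProp {n : ℕ} (X : MatchProp) (I : OSMInstance n)
    (μ : Finset (Fin n × Fin n)) : Prop :=
  match X with
  | .po => I.ParetoOptimal μ
  | .rm => I.RankMaximal μ
  | .mcrm => I.MaxCardRankMaximal μ
  | .fair => I.FairMatching μ

namespace OSMInstance

variable {n : ℕ} {I : OSMInstance n} {v : Fin n → Fin n → ℝ}

lemma edgeRank_le (I : OSMInstance n) {e : Fin n × Fin n} (he : e.2 ∈ I.accept e.1) :
    I.edgeRank e ≤ n := by
  have hlt : ((I.accept e.1).filter (fun h' => I.strictPref e.1 h' e.2)).card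
      < (I.accept e.1).card :=
    card_lt_card (filter_ssubset.2 ⟨e.2, he, fun h => h.2 h.1⟩)
  have hle : (I.accept e.1).card ≤ n := by simpa using card_le_univ (I.accept e.1)
  unfold edgeRank
  lia

lemma IsMatching.subset {μ ν : Finset (Fin n × Fin n)} (hμ : I.IsMatching μ) (h : ν ⊆ μ) :
    I.IsMatching ν :=
  ⟨fun e he => hμ.1 e (h he), fun e he e' he' => hμ.2.1 e (h he) e' (h he'),
    fun e he e' he' => hμ.2.2 e (h he) e' (h he')⟩

/-- Matching a free agent to `h`, taking `h` away from its current owner. -/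
lemma IsMatching.insert_reassign {μ : Finset (Fin n × Fin n)} (hμ : I.IsMatching μ)
    {a h : Fin n} (ha : ∀ e ∈ μ, e.1 ≠ a) (hh : h ∈ I.accept a) :
    I.IsMatching (insert (a, h) (μ.filter (fun e => e.2 ≠ h))) := by
  obtain ⟨h₁, h₂, h₃⟩ := hμ
  refine ⟨?_, ?_, ?_⟩
  · intro e he
    rcases mem_insert.1 he with rfl | he
    · exact hh
    · exact h₁ e (mem_filter.1 he).1
  · intro e he e' he' heq
    rcases mem_insert.1 he with rfl | he <;> rcases mem_insert.1 he' with rfl | he'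
    · rfl
    · exact absurd heq.symm (ha e' (mem_filter.1 he').1)
    · exact absurd heq (ha e (mem_filter.1 he).1)
    · exact h₂ e (mem_filter.1 he).1 e' (mem_filter.1 he').1 heq
  · intro e he e' he' heq
    rcases mem_insert.1 he with rfl | he <;> rcases mem_insert.1 he' with rfl | he'
    · rfl
    · exact absurd heq.symm (mem_filter.1 he').2
    · exact absurd heq (mem_filter.1 he).2
    · exact h₃ e (mem_filter.1 he).1 e' (mem_filter.1 he').1 heq

/-- In a maximum-weight matching, a positive-weight edge at a free agent is dominated by some
matching edge. -/
lemma IsMaxWeightMatching.exists_le {w : Fin n × Fin n → ℝ} {μ : Finset (Fin n × Fin n)}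
    (hμ : I.IsMaxWeightMatching w μ) {a h : Fin n} (ha : ∀ e ∈ μ, e.1 ≠ a)
    (hh : h ∈ I.accept a) (hpos : 0 < w (a, h)) : ∃ e ∈ μ, w (a, h) ≤ w e := by
  have hle := hμ.2 _ (hμ.1.insert_reassign ha hh)
  unfold weightSum at hle
  rw [sum_insert (fun hmem => ha _ (mem_filter.1 hmem).1 rfl),
    ← sum_filter_not_add_sum_filter μ (fun e => e.2 = h)] at hle
  have hle' : w (a, h) ≤ ∑ e ∈ μ.filter (fun e => e.2 = h), w e := by
    simpa [add_comm] using hle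
  rcases (μ.filter (fun e => e.2 = h)).eq_empty_or_nonempty with h0 | ⟨e₀, he₀⟩
  · rw [h0, sum_empty] at hle'
    exact absurd hle' hpos.not_ge
  · have hmem := mem_filter.1 he₀
    have hsing : μ.filter (fun e => e.2 = h) = {e₀} := by
      refine eq_singleton_iff_unique_mem.2 ⟨he₀, fun e he => ?_⟩
      have he' := mem_filter.1 he
      exact hμ.1.2.2 e he'.1 e₀ hmem.1 (he'.2.trans hmem.2.symm)
    rw [hsing, sum_singleton] at hle'
    exact ⟨e₀, hmem.1, hle'⟩

lemma IsMaxWeightMatching.filter_ne_zero {w : Fin n × Fin n → ℝ} {μ : Finset (Fin n × Fin n)}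
    (hμ : I.IsMaxWeightMatching w μ) :
    I.IsMaxWeightMatching w (μ.filter (fun e => w e ≠ 0)) := by
  refine ⟨hμ.1.subset (filter_subset _ _), fun μ' hμ' => (hμ.2 μ' hμ').trans_eq ?_⟩
  exact (sum_filter_ne_zero μ).symm

/-- Under unit-sum valuations, an agent with a low value for `h` has a rank-1 object of high
value. -/
lemma exists_rank_one_of_lt (hv : I.Consistent v) (hus : I.UnitSum v) {a h : Fin n}
    (hh : h ∈ I.accept a) (hlt : v a h < 1 / (2 * n)) :
    ∃ h₁ ∈ I.accept a, I.edgeRank (a, h₁) = 1 ∧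
      1 / 2 ≤ ((I.edgeRank (a, h) : ℝ) - 1) * v a h₁ := by
  obtain ⟨h₁, hh₁, hmax⟩ := exists_max_image (I.accept a) (v a) (I.accept_nonempty a)
  have hn : (0 : ℝ) < n := by exact_mod_cast h.pos
  refine ⟨h₁, hh₁, ?_, ?_⟩
  · unfold edgeRank
    rw [filter_eq_empty_iff.2, card_empty]
    exact fun h' hh' hs => hs.2 ((hv.2.2 a h₁ h' hh₁ hh').2 (hmax h' hh'))
  · have hsum := hus a
    rw [← sum_filter_add_sum_filter_not (I.accept a) (fun h' => I.strictPref a h' h)] at hsum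
    have htop := sum_le_card_nsmul
      ((I.accept a).filter (fun h' => I.strictPref a h' h)) (v a) (v a h₁)
      (fun h' hh' => hmax h' (mem_filter.1 hh').1)
    have hlow := sum_le_card_nsmul
      ((I.accept a).filter (fun h' => ¬ I.strictPref a h' h)) (v a) (1 / (2 * n))
      (fun h' hh' => by
        obtain ⟨hacc, hns⟩ := mem_filter.1 hh'
        refine le_trans ?_ hlt.le
        have hp : I.pref a h h' := by
          by_contra hc
          exact hns ⟨(I.pref_total a h h' hh hacc).resolve_left hc, hc⟩
        exact (hv.2.2 a h h' hh hacc).1 hp)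
    have hcard : (((I.accept a).filter (fun h' => ¬ I.strictPref a h' h)).card : ℝ) ≤ n := by
      exact_mod_cast (card_le_univ _).trans_eq (Fintype.card_fin n)
    have hhalf : (((I.accept a).filter (fun h' => ¬ I.strictPref a h' h)).card : ℝ) *
        (1 / (2 * n)) ≤ 1 / 2 := by
      calc _ ≤ (n : ℝ) * (1 / (2 * n)) := by gcongr
        _ = 1 / 2 := by field_simp
    rw [nsmul_eq_mul] at htop hlow
    have hr : ((I.edgeRank (a, h) : ℝ) - 1) =
        ((I.accept a).filter (fun h' => I.strictPref a h' h)).card := by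
      simp [edgeRank]
    rw [hr]
    linarith

/-- A matching has at most `2 * |ν|` edges sharing an endpoint with `ν`. -/
lemma IsMatching.card_filter_touching_le {μ : Finset (Fin n × Fin n)} (hμ : I.IsMatching μ)
    (ν : Finset (Fin n × Fin n)) :
    (μ.filter (fun e => ¬ ∀ e' ∈ ν, e.1 ≠ e'.1 ∧ e.2 ≠ e'.2)).card ≤ 2 * ν.card := by
  have hsub : μ.filter (fun e => ¬ ∀ e' ∈ ν, e.1 ≠ e'.1 ∧ e.2 ≠ e'.2) ⊆
      μ.filter (fun e => e.1 ∈ ν.image Prod.fst) ∪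
        μ.filter (fun e => e.2 ∈ ν.image Prod.snd) := by
    intro e he
    obtain ⟨heμ, hne⟩ := mem_filter.1 he
    push Not at hne
    obtain ⟨e', he', himp⟩ := hne
    rw [mem_union, mem_filter, mem_filter]
    by_cases h1 : e.1 = e'.1
    · exact Or.inl ⟨heμ, mem_image.2 ⟨e', he', h1.symm⟩⟩
    · exact Or.inr ⟨heμ, mem_image.2 ⟨e', he', (himp h1).symm⟩⟩
  have hfst : (μ.filter (fun e => e.1 ∈ ν.image Prod.fst)).card ≤ ν.card :=
    (card_le_card_of_injOn Prod.fst (fun e he => (mem_filter.1 he).2)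
      (fun e he e' he' => hμ.2.1 e (mem_filter.1 he).1 e' (mem_filter.1 he').1)).trans
      card_image_le
  have hsnd : (μ.filter (fun e => e.2 ∈ ν.image Prod.snd)).card ≤ ν.card :=
    (card_le_card_of_injOn Prod.snd (fun e he => (mem_filter.1 he).2)
      (fun e he e' he' => hμ.2.2 e (mem_filter.1 he).1 e' (mem_filter.1 he').1)).trans
      card_image_le
  have h := (card_le_card hsub).trans (card_union_le _ _)
  lia

end OSMInstance

/-- if the filtered maximum-weight matching contains no rank-1 edge, then
together with the auxiliary matching (for ranks up to `k = ⌊n^(1/3)/2⌋`) its welfare is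
at least `|X'| / (2n)`, for unit-sum valuations and `n ≥ 8`. -/
theorem aux_welfare_bound_norank1 {n : ℕ} (hn : 8 ≤ n) (I : OSMInstance n)
    (v : Fin n → Fin n → ℝ) (hv : I.Consistent v) (hus : I.UnitSum v)
    (t : ℕ → ℝ) (ht1 : t 1 = 1 / (n : ℝ) ^ ((1 : ℝ) / 3))
    (ht : ∀ i, 2 ≤ i → i ≤ n →
      t i = 1 / (min (i : ℝ) ((n : ℝ) ^ ((1 : ℝ) / 3)) * (n : ℝ) ^ ((2 : ℝ) / 3)))
    (k : ℕ) (hk : k = ⌊(n : ℝ) ^ ((1 : ℝ) / 3) / 2⌋₊)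
    (w : Fin n × Fin n → ℝ)
    (hw : ∀ e, w e = if t (I.edgeRank e) ≤ v e.1 e.2 then t (I.edgeRank e) else 0)
    (μ₀ : Finset (Fin n × Fin n)) (hμ₀ : I.IsMaxWeightMatching w μ₀)
    (μMM : Finset (Fin n × Fin n)) (hμMM : μMM = μ₀.filter (fun e => w e ≠ 0))
    (μaux' : Finset (Fin n × Fin n)) (haux' : I.IsMatching μaux')
    (hauxmax : ∀ μ'', I.IsMatching μ'' →
      (μ''.filter (fun e => I.edgeRank e ≤ k)).card ≤
        (μaux'.filter (fun e => I.edgeRank e ≤ k)).card)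
    (X' : Finset (Fin n × Fin n)) (hX' : X' = μaux'.filter (fun e => I.edgeRank e ≤ k))
    (μaux : Finset (Fin n × Fin n))
    (hμaux : μaux = μaux'.filter (fun e => ∀ e' ∈ μMM, e.1 ≠ e'.1 ∧ e.2 ≠ e'.2))
    (hnorank1 : ¬ ∃ e ∈ μMM, I.edgeRank e = 1) :
    (X'.card : ℝ) / (2 * n) ≤ I.SW v μMM + I.SW v μaux := by
  have hn0 : (0 : ℝ) < n := by exact_mod_cast (by lia : 0 < n)
  obtain ⟨c, hc⟩ : ∃ c, c = (n : ℝ) ^ ((1 : ℝ) / 3) := ⟨_, rfl⟩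
  have hc0 : 0 < c := hc ▸ Real.rpow_pos_of_pos hn0 _
  have hc3 : c ^ 3 = n := by
    rw [hc, ← Real.rpow_natCast, ← Real.rpow_mul hn0.le]
    norm_num
  have hc2 : (n : ℝ) ^ ((2 : ℝ) / 3) = c ^ 2 := by
    rw [hc, ← Real.rpow_natCast, ← Real.rpow_mul hn0.le]
    norm_num
  have hcge : 2 ≤ c := by
    refine le_of_pow_le_pow_left₀ three_ne_zero hc0.le ?_
    rw [hc3]
    exact_mod_cast hn
  rw [← hc] at ht1 hk
  simp only [← hc, hc2] at ht
  have hkc : (k : ℝ) ≤ c / 2 := hk ▸ Nat.floor_le (by positivity)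
  have hMM : I.IsMaxWeightMatching w μMM := hμMM ▸ hμ₀.filter_ne_zero
  have hedge : ∀ e ∈ μMM, 1 / (n : ℝ) ≤ v e.1 e.2 ∧ w e < 1 / c := by
    intro e he
    have hr1 : I.edgeRank e ≠ 1 := fun h => hnorank1 ⟨e, he, h⟩
    have hr2 : 2 ≤ I.edgeRank e := by
      have : 1 ≤ I.edgeRank e := Nat.le_add_left _ _
      lia
    have hwne : w e ≠ 0 := by
      rw [hμMM] at he
      exact (mem_filter.1 he).2
    have hte := ht _ hr2 (I.edgeRank_le (hMM.1.1 e he))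
    have hmin : (2 : ℝ) ≤ min (I.edgeRank e : ℝ) c := le_min (by exact_mod_cast hr2) hcge
    have htv : t (I.edgeRank e) ≤ v e.1 e.2 := by
      by_contra hcon
      exact hwne (by rw [hw, if_neg hcon])
    refine ⟨le_trans ?_ htv, ?_⟩
    · rw [hte, ← hc3]
      refine one_div_le_one_div_of_le (by positivity) ?_
      calc min (I.edgeRank e : ℝ) c * c ^ 2 ≤ c * c ^ 2 := by gcongr; exact min_le_right _ _
        _ = c ^ 3 := by ring
    · rw [hw, if_pos htv, hte]
      refine one_div_lt_one_div_of_lt hc0 ?_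
      nlinarith [mul_le_mul_of_nonneg_right hmin (sq_nonneg c)]
  have hSWMM : (μMM.card : ℝ) * (1 / n) ≤ I.SW v μMM := by
    rw [← nsmul_eq_mul]
    exact card_nsmul_le_sum _ _ _ fun e he => (hedge e he).1
  have hfree : ∀ e ∈ X'.filter (fun e => ∀ e' ∈ μMM, e.1 ≠ e'.1 ∧ e.2 ≠ e'.2),
      1 / (2 * (n : ℝ)) ≤ v e.1 e.2 := by
    rintro ⟨a, h⟩ he
    obtain ⟨heX, hdisj⟩ := mem_filter.1 he
    rw [hX'] at heX
    obtain ⟨heaux, hrk⟩ := mem_filter.1 heX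
    by_contra! hlt
    obtain ⟨h₁, hh₁, hrank, hbig⟩ :=
      OSMInstance.exists_rank_one_of_lt hv hus (haux'.1 _ heaux) hlt
    have hrk' : (I.edgeRank (a, h) : ℝ) - 1 ≤ c / 2 := by
      have : (I.edgeRank (a, h) : ℝ) ≤ k := by exact_mod_cast hrk
      linarith
    have hval : 1 / c ≤ v a h₁ := by
      rw [div_le_iff₀ hc0]
      have := mul_le_mul_of_nonneg_right hrk' (hv.1 a h₁).1
      linarith
    have hw₁ : w (a, h₁) = 1 / c := by
      rw [hw, hrank, ht1, if_pos hval]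
    obtain ⟨e', he', hle⟩ := hMM.exists_le (fun e' he' => (hdisj e' he').1.symm) hh₁
      (by rw [hw₁]; positivity)
    exact absurd (hedge e' he').2 (not_lt.2 (hw₁ ▸ hle))
  have hSWaux : ((X'.filter (fun e => ∀ e' ∈ μMM, e.1 ≠ e'.1 ∧ e.2 ≠ e'.2)).card : ℝ) *
      (1 / (2 * n)) ≤ I.SW v μaux := by
    rw [← nsmul_eq_mul]
    refine (card_nsmul_le_sum _ _ _ hfree).trans ?_
    refine sum_le_sum_of_subset_of_nonneg ?_ fun e _ _ => (hv.1 e.1 e.2).1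
    rw [hμaux, hX']
    exact filter_subset_filter _ (filter_subset _ _)
  have hX'm : I.IsMatching X' := hX' ▸ haux'.subset (filter_subset _ _)
  have hcard : (X'.card : ℝ) ≤
      (X'.filter (fun e => ∀ e' ∈ μMM, e.1 ≠ e'.1 ∧ e.2 ≠ e'.2)).card + 2 * μMM.card := by
    have h := hX'm.card_filter_touching_le μMM
    have h' := card_filter_add_card_filter_not (s := X')
      (fun e => ∀ e' ∈ μMM, e.1 ≠ e'.1 ∧ e.2 ≠ e'.2)
    exact_mod_cast (by lia)
  calc (X'.card : ℝ) / (2 * n)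
      ≤ ((X'.filter (fun e => ∀ e' ∈ μMM, e.1 ≠ e'.1 ∧ e.2 ≠ e'.2)).card + 2 * μMM.card) /
          (2 * n) := by gcongr
    _ = μMM.card * (1 / n) +
        (X'.filter (fun e => ∀ e' ∈ μMM, e.1 ≠ e'.1 ∧ e.2 ≠ e'.2)).card * (1 / (2 * n)) := by
          field_simp
          ring
    _ ≤ I.SW v μMM + I.SW v μaux := add_le_add hSWMM hSWaux
end

section
/- Let a_i be an agent with acceptable set A_i among n objects and let v_i be a unit-sum valuation of a_i consistent with a_i's weak order, i.e., v_i : H → [0,1] with v_i(h) = 0 for h ∉ A_i, h ⪰_i h' iff v_i(h) ≥ v_i(h') for h, h' ∈ A_i, and Σ_{h ∈ A_i} v_i(h) = 1. Suppose v_i(h) < 1/n^{1/3} for every h ∈ A_i of rank 1 for a_i. Then for every j ∈ {1,...,⌊n^{1/3}/2⌋} and every h ∈ A_i of rank j for a_i, v_i(h) ≥ 1/(2n). -/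
open Finset
open scoped Classical

/-- for a unit-sum agent whose rank-1 objects are all worth less than
`1 / n^(1/3)`, every object of rank at most `⌊n^(1/3)/2⌋` is worth at least `1/(2n)`. -/
theorem unitSum_value_lower_bound {n : ℕ}
    (A : Finset (Fin n)) (hA : A.Nonempty)
    (pref : Fin n → Fin n → Prop)
    (hrefl : ∀ h ∈ A, pref h h)
    (htrans : ∀ h₁ ∈ A, ∀ h₂ ∈ A, ∀ h₃ ∈ A, pref h₁ h₂ → pref h₂ h₃ → pref h₁ h₃)
    (htotal : ∀ h₁ ∈ A, ∀ h₂ ∈ A, pref h₁ h₂ ∨ pref h₂ h₁)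
    (v : Fin n → ℝ)
    (hv01 : ∀ h, 0 ≤ v h ∧ v h ≤ 1)
    (hv0 : ∀ h ∉ A, v h = 0)
    (hcons : ∀ h ∈ A, ∀ h' ∈ A, (pref h h' ↔ v h' ≤ v h))
    (hsum : ∑ h ∈ A, v h = 1)
    (rank : Fin n → ℕ)
    (hrank : ∀ h, rank h = (A.filter (fun h' => pref h' h ∧ ¬ pref h h')).card + 1)
    (htop : ∀ h ∈ A, rank h = 1 → v h < 1 / (n : ℝ) ^ ((1 : ℝ) / 3)) :
    ∀ j, 1 ≤ j → j ≤ ⌊(n : ℝ) ^ ((1 : ℝ) / 3) / 2⌋₊ →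
      ∀ h ∈ A, rank h = j → 1 / (2 * (n : ℝ)) ≤ v h := by
  intro j _ hj h hh hjr
  set c : ℝ := (n : ℝ) ^ ((1 : ℝ) / 3) with hc
  have hn : (0 : ℝ) < n := by exact_mod_cast Fin.pos h
  have hcpos : 0 < c := Real.rpow_pos_of_pos hn _
  -- A value-maximal acceptable object has rank 1, so `1 / c` bounds every value on `A`.
  obtain ⟨m, hm, hmax⟩ := A.exists_max_image v hA
  have hm1 : rank m = 1 := by
    rw [hrank, Finset.filter_eq_empty_iff.mpr, Finset.card_empty]
    rintro x hx ⟨-, hx'⟩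
    exact hx' ((hcons m hm x hx).mpr (hmax x hx))
  have hle : ∀ x ∈ A, v x ≤ 1 / c := fun x hx => (hmax x hx).trans (htop m hm hm1).le
  set B := A.filter (fun h' => pref h' h ∧ ¬ pref h h') with hB
  have hBcard : (B.card : ℝ) ≤ c / 2 := by
    have hj' : (j : ℝ) ≤ c / 2 :=
      (Nat.cast_le.mpr hj).trans (Nat.floor_le (by positivity))
    have hBj : (B.card : ℝ) + 1 = j := by exact_mod_cast (hrank h).symm.trans hjr
    linarith
  have hsumB : ∑ x ∈ B, v x ≤ 1 / 2 := by
    calc ∑ x ∈ B, v x ≤ B.card • (1 / c) :=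
          Finset.sum_le_card_nsmul _ _ _ fun x hx => hle x (Finset.mem_of_mem_filter x hx)
      _ = B.card * (1 / c) := nsmul_eq_mul _ _
      _ ≤ c / 2 * (1 / c) := by gcongr
      _ = 1 / 2 := by field_simp
  have hsumC : ∑ x ∈ A \ B, v x ≤ n * v h := by
    calc ∑ x ∈ A \ B, v x ≤ (A \ B).card • v h := by
          refine Finset.sum_le_card_nsmul _ _ _ fun x hx => ?_
          obtain ⟨hxA, hxB⟩ := Finset.mem_sdiff.mp hx
          refine (hcons h hh x hxA).mp ?_
          by_contra hhx
          exact hxB (Finset.mem_filter.mpr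
            ⟨hxA, (htotal h hh x hxA).resolve_left hhx, hhx⟩)
      _ = (A \ B).card * v h := nsmul_eq_mul _ _
      _ ≤ n * v h := by
          have hcard : (A \ B).card ≤ n := card_finset_fin_le _
          have := (hv01 h).1
          gcongr
  have hsplit := Finset.sum_sdiff (f := v) (Finset.filter_subset _ _ : B ⊆ A)
  rw [div_le_iff₀ (by positivity)]
  linarith
end

section
/- Let I be an instance with n ≥ 2 agents and n objects, and let μ be a matching of G_I that is Pareto optimal, or a priority-p matching for some p ∈ 𝕡. Let k be a positive integer with k ≤ ⌊n/2⌋, let B_i denote the set of agents matched by a rank-i edge of μ, and let B = ∪_{i=1}^{k} B_i. Then |B| ≥ min{k, |μ|}. -/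
open Finset
open scoped Classical

namespace OSMInstance

variable {n : ℕ} {I : OSMInstance n} {μ : Finset (Fin n × Fin n)}

/-- No reassignment of acceptable objects to the matched agents of `μ` makes all of them weakly
better off and some of them strictly better off. -/
def NoImprovingReassignment (I : OSMInstance n) (μ : Finset (Fin n × Fin n)) : Prop :=
  ∀ g : Fin n × Fin n → Fin n, Set.InjOn g μ → (∀ e ∈ μ, g e ∈ I.accept e.1) →
    (∀ e ∈ μ, I.pref e.1 (g e) e.2) → ∀ e ∈ μ, ¬ I.strictPref e.1 (g e) e.2

theorem IsMatching.image_reassign (hμ : I.IsMatching μ) {g : Fin n × Fin n → Fin n}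
    (hinj : Set.InjOn g μ) (hacc : ∀ e ∈ μ, g e ∈ I.accept e.1) :
    I.IsMatching (μ.image fun e => (e.1, g e)) := by
  refine ⟨?_, ?_, ?_⟩
  · exact Finset.forall_mem_image.2 hacc
  · simp only [Finset.forall_mem_image]
    intro e he e' he' h
    rw [hμ.2.1 e he e' he' h]
  · simp only [Finset.forall_mem_image]
    intro e he e' he' h
    rw [hinj he he' h]

theorem ParetoOptimal.noImprovingReassignment (hμ : I.ParetoOptimal μ) :
    I.NoImprovingReassignment μ := by
  intro g hinj hacc hpref e he hstrict
  have hmem : ∀ e ∈ μ, (e.1, g e) ∈ μ.image fun e => (e.1, g e) := fun e he =>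
    Finset.mem_image_of_mem _ he
  refine hμ.2 ⟨_, hμ.1.image_reassign hinj hacc, fun i => ?_, e.1, Or.inr ?_⟩
  · by_cases h : I.Unmatched μ i
    · exact Or.inl h
    · obtain ⟨x, hx⟩ : ∃ x, (i, x) ∈ μ := by simpa [Unmatched] using h
      exact Or.inr ⟨x, _, hx, hmem _ hx, hpref _ hx⟩
  · exact ⟨e.2, _, he, hmem e he, hstrict⟩

theorem edgeRank_le_s12 {i h : Fin n} (hh : h ∈ I.accept i) : I.edgeRank (i, h) ≤ n := by
  have hsub : (I.accept i).filter (fun h' => I.strictPref i h' h) ⊂ Finset.univ := by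
    refine (Finset.ssubset_univ_iff).2 fun heq => ?_
    have := heq ▸ Finset.mem_univ h
    exact (Finset.mem_filter.1 this).2.2 (I.pref_refl i h hh)
  simpa [edgeRank] using Finset.card_lt_card hsub

theorem edgeRank_anti {i h h' : Fin n} (hh : h ∈ I.accept i) (hh' : h' ∈ I.accept i)
    (hpref : I.pref i h' h) : I.edgeRank (i, h') ≤ I.edgeRank (i, h) := by
  refine Nat.succ_le_succ (Finset.card_le_card fun x hx => ?_)
  obtain ⟨hx, hxh, hhx⟩ := Finset.mem_filter.1 hx
  exact Finset.mem_filter.2 ⟨hx, I.pref_trans i x h' h hx hh' hh hxh hpref,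
    fun hc => hhx (I.pref_trans i h' h x hh' hh hx hpref hc)⟩

theorem edgeRank_strictAnti {i h h' : Fin n} (hh : h ∈ I.accept i) (hh' : h' ∈ I.accept i)
    (hstrict : I.strictPref i h' h) : I.edgeRank (i, h') < I.edgeRank (i, h) := by
  refine Nat.succ_lt_succ (Finset.card_lt_card (Finset.ssubset_iff_subset_ne.2 ⟨?_, ?_⟩))
  · intro x hx
    obtain ⟨hx, hxh, hhx⟩ := Finset.mem_filter.1 hx
    exact Finset.mem_filter.2 ⟨hx, I.pref_trans i x h' h hx hh' hh hxh hstrict.1,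
      fun hc => hhx (I.pref_trans i h' h x hh' hh hx hstrict.1 hc)⟩
  · intro heq
    have hmem : h' ∈ (I.accept i).filter (fun x => I.strictPref i x h) :=
      Finset.mem_filter.2 ⟨hh', hstrict⟩
    exact (Finset.mem_filter.1 (heq ▸ hmem)).2.2 (I.pref_refl i h' hh')

theorem IsPriorityMatching.noImprovingReassignment {p : ℕ → ℝ}
    (hp : StrictAntiOn p (Set.Icc 1 n)) (hμ : I.IsPriorityMatching p μ) :
    I.NoImprovingReassignment μ := by
  intro g hinj hacc hpref e he hstrict
  have hrank : ∀ {i h : Fin n}, h ∈ I.accept i → I.edgeRank (i, h) ∈ Set.Icc 1 n := fun hh =>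
    ⟨Nat.succ_le_succ (Nat.zero_le _), edgeRank_le_s12 hh⟩
  refine (hμ.2 _ (hμ.1.image_reassign hinj hacc)).not_gt ?_
  unfold weightSum
  rw [Finset.sum_image fun x hx y hy hxy => hinj hx hy (congrArg Prod.snd hxy)]
  refine Finset.sum_lt_sum (fun x hx => ?_) ⟨e, he, ?_⟩
  · exact hp.antitoneOn (hrank (hacc x hx)) (hrank (hμ.1.1 x hx))
      (edgeRank_anti (hμ.1.1 x hx) (hacc x hx) (hpref x hx))
  · exact hp (hrank (hacc e he)) (hrank (hμ.1.1 e he))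
      (edgeRank_strictAnti (hμ.1.1 e he) (hacc e he) hstrict)

end OSMInstance

theorem strictAntiOn_of_mem_prioritySet {n : ℕ} (hn : 2 ≤ n) {p : ℕ → ℝ}
    (hp : p ∈ PrioritySet n) : StrictAntiOn p (Set.Icc 1 n) := by
  have hn' : (1 : ℝ) < n := by exact_mod_cast hn
  intro r hr s hs hrs
  obtain ⟨hr1, hrn⟩ := hr
  obtain ⟨hs1, hsn⟩ := hs
  rcases hp with rfl | rfl | rfl
  · exact pow_lt_pow_right₀ hn' (by omega)
  · exact add_lt_add_right (pow_lt_pow_right₀ hn' (by omega)) _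
  · have h : (n : ℝ) ^ (r - 1) < (n : ℝ) ^ (s - 1) := pow_lt_pow_right₀ hn' (by omega)
    simp only [pFairVec]
    linarith

theorem Set.MapsTo.exists_mem_periodicPts {α : Type*} [Finite α] {f : α → α} {s : Set α}
    (hf : Set.MapsTo f s s) (hs : s.Nonempty) : ∃ x ∈ s, x ∈ Function.periodicPts f := by
  obtain ⟨x, hx⟩ := hs
  obtain ⟨a, b, hne, hab⟩ := Finite.exists_ne_map_eq_of_infinite (fun m : ℕ => f^[m] x)
  wlog hlt : a < b generalizing a b
  · exact this b a hne.symm hab.symm (by omega)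
  refine ⟨f^[a] x, hf.iterate a hx, Function.mk_mem_periodicPts (Nat.sub_pos_of_lt hlt) ?_⟩
  rw [Function.IsPeriodicPt, Function.IsFixedPt, ← Function.iterate_add_apply,
    Nat.sub_add_cancel hlt.le]
  exact hab.symm

namespace OSMInstance

variable {n : ℕ} {I : OSMInstance n} {μ : Finset (Fin n × Fin n)}

/-- If every edge of a nonempty `C ⊆ μ` had an agent strictly preferring the object of another edge
of `C`, the agents on a cycle of these preferences could trade. -/
theorem NoImprovingReassignment.exists_forall_not_strictPref (hμ : I.IsMatching μ)
    (h : I.NoImprovingReassignment μ) {C : Finset (Fin n × Fin n)} (hC : C ⊆ μ)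
    (hne : C.Nonempty) : ∃ e ∈ C, ∀ e' ∈ C, e'.2 ∈ I.accept e.1 → ¬ I.strictPref e.1 e'.2 e.2 := by
  by_contra! hcon
  have hf : ∀ e, ∃ e', e ∈ C → e' ∈ C ∧ e'.2 ∈ I.accept e.1 ∧ I.strictPref e.1 e'.2 e.2 := by
    intro e
    by_cases he : e ∈ C
    · obtain ⟨e', h₁, h₂⟩ := hcon e he
      exact ⟨e', fun _ => ⟨h₁, h₂⟩⟩
    · exact ⟨e, fun hc => absurd hc he⟩
  choose f hf using hf
  obtain ⟨x, hxC, hx⟩ := Set.MapsTo.exists_mem_periodicPts (f := f) (s := (C : Set _))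
    (fun e he => (hf e he).1) (Finset.coe_nonempty.2 hne)
  have hbij := Function.bijOn_periodicPts f
  let φ : Fin n × Fin n → Fin n × Fin n := fun e =>
    if e ∈ C ∧ e ∈ Function.periodicPts f then f e else e
  have hφμ : ∀ e ∈ μ, φ e ∈ μ := by
    intro e he
    simp only [φ]
    split_ifs with hc
    · exact hC (hf e hc.1).1
    · exact he
  have hφinj : Function.Injective φ := by
    intro a b hab
    simp only [φ] at hab
    split_ifs at hab with ha hb hb
    · exact hbij.injOn ha.2 hb.2 hab
    · exact absurd (hab ▸ ⟨(hf a ha.1).1, hbij.mapsTo ha.2⟩) hb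
    · exact absurd (hab ▸ ⟨(hf b hb.1).1, hbij.mapsTo hb.2⟩) ha
    · exact hab
  refine h (fun e => (φ e).2) ?_ ?_ ?_ x (hC hxC) ?_
  · exact fun a ha b hb hab => hφinj (hμ.2.2 _ (hφμ a ha) _ (hφμ b hb) hab)
  · intro e he
    simp only [φ]
    split_ifs with hc
    · exact (hf e hc.1).2.1
    · exact hμ.1 e he
  · intro e he
    simp only [φ]
    split_ifs with hc
    · exact (hf e hc.1).2.2.1
    · exact I.pref_refl _ _ (hμ.1 e he)
  · have hφx : φ x = f x := if_pos ⟨hxC, hx⟩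
    simpa only [hφx] using (hf x hxC).2.2

theorem NoImprovingReassignment.mem_image_snd_of_strictPref (hμ : I.IsMatching μ)
    (h : I.NoImprovingReassignment μ) {e : Fin n × Fin n} (he : e ∈ μ) {x : Fin n}
    (hx : x ∈ I.accept e.1) (hstrict : I.strictPref e.1 x e.2) : x ∈ μ.image Prod.snd := by
  by_contra hfree
  have hne : ∀ a ∈ μ, a.2 ≠ x := fun a ha hax => hfree (Finset.mem_image.2 ⟨a, ha, hax⟩)
  refine h (fun a => if a = e then x else a.2) ?_ ?_ ?_ e he (by simpa using hstrict)
  · intro a ha b hb hab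
    simp only at hab
    split_ifs at hab with h₁ h₂ h₂
    · rw [h₁, h₂]
    · exact absurd hab.symm (hne b hb)
    · exact absurd hab (hne a ha)
    · exact hμ.2.2 a ha b hb hab
  · intro a ha
    split_ifs with h₁
    · rwa [h₁]
    · exact hμ.1 a ha
  · intro a ha
    split_ifs with h₁
    · rw [h₁]
      exact hstrict.1
    · exact I.pref_refl _ _ (hμ.1 a ha)

theorem NoImprovingReassignment.min_le_card_filter_edgeRank_le (hμ : I.IsMatching μ)
    (h : I.NoImprovingReassignment μ) (k : ℕ) :
    min k μ.card ≤ (μ.filter (fun e => I.edgeRank e ≤ k)).card := by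
  by_contra! hlt
  obtain ⟨hk, hcard⟩ := lt_min_iff.1 hlt
  set B := μ.filter (fun e => I.edgeRank e ≤ k) with hB
  have hne : (μ \ B).Nonempty := Finset.sdiff_nonempty.2 fun hsub =>
    hcard.not_ge (Finset.card_le_card hsub)
  obtain ⟨e, he, hbest⟩ := h.exists_forall_not_strictPref hμ Finset.sdiff_subset hne
  obtain ⟨heμ, heB⟩ := Finset.mem_sdiff.1 he
  have hrank : k < I.edgeRank e := by
    by_contra! hle
    exact heB (Finset.mem_filter.2 ⟨heμ, hle⟩)
  obtain ⟨x, hx, hxB⟩ : ∃ x ∈ (I.accept e.1).filter (fun x => I.strictPref e.1 x e.2),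
      x ∉ B.image Prod.snd := Finset.exists_mem_notMem_of_card_lt_card
    ((Finset.card_image_le.trans_lt hk).trans_le (Nat.le_of_lt_succ hrank))
  obtain ⟨hxacc, hstrict⟩ := Finset.mem_filter.1 hx
  obtain ⟨e', he', rfl⟩ :=
    Finset.mem_image.1 (h.mem_image_snd_of_strictPref hμ heμ hxacc hstrict)
  exact hbest e' (Finset.mem_sdiff.2 ⟨he', fun hc => hxB (Finset.mem_image_of_mem _ hc)⟩)
    hxacc hstrict

end OSMInstance

/-- in a Pareto optimal or priority-`p` matching (`p ∈ 𝕡`), at least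
`min k |μ|` agents are matched by an edge of rank at most `k`, for `1 ≤ k ≤ ⌊n/2⌋`. -/
theorem boundB {n : ℕ} (hn : 2 ≤ n) (I : OSMInstance n)
    (μ : Finset (Fin n × Fin n))
    (hμ : I.ParetoOptimal μ ∨ ∃ p ∈ PrioritySet n, I.IsPriorityMatching p μ)
    (k : ℕ) (hk1 : 1 ≤ k) (hk2 : k ≤ n / 2) :
    min k μ.card ≤ (μ.filter (fun e => I.edgeRank e ≤ k)).card := by
  obtain hμ | ⟨p, hp, hμ⟩ := hμ
  · exact hμ.noImprovingReassignment.min_le_card_filter_edgeRank_le hμ.1 k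
  · exact (hμ.noImprovingReassignment
      (strictAntiOn_of_mem_prioritySet hn hp)).min_le_card_filter_edgeRank_le hμ.1 k
end

section
/- There exists a constant C > 0 such that for every n and every instance I with n agents and n objects, there exist a threshold matrix T assigning to each pair (a_i, h_j) a value T(a_i, h_j) ∈ [0,1] and an outcome map f from {0,1}-valued n×n answer matrices to matchings of G_I, such that for every unit-sum valuation profile v consistent with I, letting b_v be the answer matrix with b_v(i,j) = 1 iff v_i(h_j) ≥ T(a_i, h_j): the matching f(b_v) is Pareto optimal and SW(μ* | v) ≤ C·n^{2/3}·SW(f(b_v) | v), where μ* is a Pareto optimal matching of maximum social welfare under v. -/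
open Finset
open scoped Classical

namespace OSMInstance

variable {n : ℕ}

/-! ### Pareto improvements -/

theorem IsMatching.obj_unique {I : OSMInstance n} {μ : Finset (Fin n × Fin n)}
    (hμ : I.IsMatching μ) {i h h' : Fin n} (hh : (i, h) ∈ μ) (hh' : (i, h') ∈ μ) : h = h' :=
  congrArg Prod.snd (hμ.2.1 _ hh _ hh' rfl)

theorem IsMatching.weakImprove_self {I : OSMInstance n} {μ : Finset (Fin n × Fin n)}
    (hμ : I.IsMatching μ) (i : Fin n) : I.WeakImprove μ μ i := by
  by_cases hu : I.Unmatched μ i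
  · exact Or.inl hu
  · obtain ⟨h, hh⟩ : ∃ h, (i, h) ∈ μ := by simpa [Unmatched] using hu
    exact Or.inr ⟨h, h, hh, hh, I.pref_refl i h (hμ.1 _ hh)⟩

theorem WeakImprove.trans {I : OSMInstance n} {μ₁ μ₂ μ₃ : Finset (Fin n × Fin n)}
    (h₁ : I.IsMatching μ₁) (h₂ : I.IsMatching μ₂) (h₃ : I.IsMatching μ₃) {i : Fin n}
    (h₂₁ : I.WeakImprove μ₂ μ₁ i) (h₃₂ : I.WeakImprove μ₃ μ₂ i) : I.WeakImprove μ₃ μ₁ i := by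
  rcases h₂₁ with hu | ⟨a, b, ha, hb, hba⟩
  · exact Or.inl hu
  · rcases h₃₂ with hu | ⟨b', c, hb', hc, hcb⟩
    · exact absurd hb (hu b)
    · obtain rfl := h₂.obj_unique hb hb'
      exact Or.inr ⟨a, c, ha, hc,
        I.pref_trans i c b a (h₃.1 _ hc) (h₂.1 _ hb) (h₁.1 _ ha) hcb hba⟩

theorem StrictImprove.not_weakImprove {I : OSMInstance n} {μ μ' : Finset (Fin n × Fin n)}
    (hμ : I.IsMatching μ) (hμ' : I.IsMatching μ') {i : Fin n}
    (hs : I.StrictImprove μ' μ i) : ¬ I.WeakImprove μ μ' i := by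
  rintro (hu | ⟨a, b, ha, hb, hba⟩)
  · rcases hs with ⟨-, h', hh'⟩ | ⟨h, h', -, hh', -⟩ <;> exact hu _ hh'
  · rcases hs with ⟨hu, -⟩ | ⟨h, h', hh, hh', hp⟩
    · exact hu _ hb
    · obtain rfl := hμ.obj_unique hb hh
      obtain rfl := hμ'.obj_unique ha hh'
      exact hp.2 hba

/-- Every matching is weakly improved upon by some Pareto optimal matching. -/
theorem IsMatching.exists_paretoOptimal_weakImprove {I : OSMInstance n}
    {μ : Finset (Fin n × Fin n)} (hμ : I.IsMatching μ) :
    ∃ μ', I.ParetoOptimal μ' ∧ ∀ i, I.WeakImprove μ' μ i := by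
  let _ : Preorder {ν : Finset (Fin n × Fin n) // I.IsMatching ν} :=
    { le := fun ν ν' => ∀ i, I.WeakImprove ν'.1 ν.1 i
      lt := fun ν ν' => (∀ i, I.WeakImprove ν'.1 ν.1 i) ∧ ¬ ∀ i, I.WeakImprove ν.1 ν'.1 i
      lt_iff_le_not_ge := fun _ _ => Iff.rfl
      le_refl := fun ν i => ν.2.weakImprove_self i
      le_trans := fun ν₁ ν₂ ν₃ h₁₂ h₂₃ i =>
        WeakImprove.trans ν₁.2 ν₂.2 ν₃.2 (h₁₂ i) (h₂₃ i) }
  obtain ⟨m, hm, hmax⟩ := Finite.exists_le_maximal (p := fun _ => True)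
    (a := (⟨μ, hμ⟩ : {ν : Finset (Fin n × Fin n) // I.IsMatching ν})) trivial
  refine ⟨m.1, ⟨m.2, ?_⟩, hm⟩
  rintro ⟨ν, hν, hw, i, hs⟩
  exact hs.not_weakImprove m.2 hν (hmax.2 (y := ⟨ν, hν⟩) trivial hw i)

/-- Weak improvement for every agent does not decrease the social welfare. -/
theorem SW_le_of_weakImprove {I : OSMInstance n} {v : Fin n → Fin n → ℝ} (hv : I.Consistent v)
    {μ μ' : Finset (Fin n × Fin n)} (hμ : I.IsMatching μ) (hμ' : I.IsMatching μ')
    (hw : ∀ i, I.WeakImprove μ' μ i) : I.SW v μ ≤ I.SW v μ' := by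
  have key : ∀ e : Fin n × Fin n, ∃ h, e ∈ μ → (e.1, h) ∈ μ' ∧ v e.1 e.2 ≤ v e.1 h := by
    intro e
    by_cases he : e ∈ μ
    swap
    · exact ⟨e.2, fun h => absurd h he⟩
    rcases hw e.1 with hu | ⟨a, b, ha, hb, hba⟩
    · exact absurd he (hu e.2)
    · obtain rfl : a = e.2 := hμ.obj_unique ha he
      exact ⟨b, fun _ => ⟨hb, (hv.2.2 e.1 b e.2 (hμ'.1 _ hb) (hμ.1 _ he)).1 hba⟩⟩
  choose g hg using key
  have hinj : Set.InjOn (fun e : Fin n × Fin n => (e.1, g e)) μ := fun e he e' he' hee =>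
    hμ.2.1 e he e' he' (Prod.ext_iff.1 hee).1
  calc I.SW v μ ≤ ∑ e ∈ μ, v e.1 (g e) := Finset.sum_le_sum fun e he => (hg e he).2
    _ = ∑ e ∈ μ.image (fun e => (e.1, g e)), v e.1 e.2 :=
      (Finset.sum_image (f := fun e : Fin n × Fin n => v e.1 e.2) hinj).symm
    _ ≤ I.SW v μ' := by
      refine Finset.sum_le_sum_of_subset_of_nonneg ?_ fun e _ _ => (hv.1 _ _).1
      intro e he
      obtain ⟨d, hd, rfl⟩ := Finset.mem_image.1 he
      exact (hg d hd).1

/-! ### Matchings and weights -/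

theorem exists_isMaxWeightMatching (I : OSMInstance n) (w : Fin n × Fin n → ℝ) :
    ∃ μ, I.IsMaxWeightMatching w μ := by
  obtain ⟨μ, hμ, hmax⟩ := Finset.exists_max_image
    (Finset.univ.filter fun μ => I.IsMatching μ) (weightSum w)
    ⟨∅, by simp [IsMatching]⟩
  exact ⟨μ, (Finset.mem_filter.1 hμ).2, fun ν hν => hmax ν (by simpa using hν)⟩

/-- A sum over a matching of a nonnegative function of the agents is at most the sum over all
agents. -/
theorem IsMatching.sum_agent_le {I : OSMInstance n} {μ : Finset (Fin n × Fin n)}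
    (hμ : I.IsMatching μ) {c : Fin n → ℝ} (hc : ∀ i, 0 ≤ c i) : ∑ e ∈ μ, c e.1 ≤ ∑ i, c i := by
  have hinj : Set.InjOn Prod.fst (μ : Set (Fin n × Fin n)) := fun e he e' he' =>
    hμ.2.1 e he e' he'
  rw [← Finset.sum_image (f := c) hinj]
  exact Finset.sum_le_sum_of_subset_of_nonneg (Finset.subset_univ _) fun i _ _ => hc i

/-- If each agent in `K` has at least `#K` objects of weight at least `c > 0`, then some matching
has weight at least `#K * c`. -/
theorem exists_isMatching_card_mul_le {I : OSMInstance n} {w : Fin n × Fin n → ℝ}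
    (hacc : ∀ e, 0 < w e → e.2 ∈ I.accept e.1) {c : ℝ} (hc : 0 < c)
    (K : Finset (Fin n)) (S : Fin n → Finset (Fin n)) (hS : ∀ i ∈ K, K.card ≤ (S i).card)
    (hw : ∀ i ∈ K, ∀ h ∈ S i, c ≤ w (i, h)) :
    ∃ μ, I.IsMatching μ ∧ K.card * c ≤ weightSum w μ := by
  have hall : ∀ s : Finset K, s.card ≤ (s.biUnion fun i => S i).card := by
    intro s
    rcases s.eq_empty_or_nonempty with rfl | ⟨i, hi⟩
    · simp
    · calc s.card ≤ K.card := by simpa using Finset.card_le_univ s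
        _ ≤ (S i).card := hS i i.2
        _ ≤ _ := Finset.card_le_card (Finset.subset_biUnion_of_mem (fun i : K => S i) hi)
  obtain ⟨g, hginj, hg⟩ :=
    (Finset.all_card_le_biUnion_card_iff_exists_injective fun i : K => S i).1 hall
  have hwg : ∀ i : K, c ≤ w (i, g i) := fun i => hw i i.2 _ (hg i)
  have hinj : Function.Injective fun i : K => ((i : Fin n), g i) := fun i j hij =>
    hginj (congrArg Prod.snd hij)
  refine ⟨Finset.univ.image fun i : K => ((i : Fin n), g i), ⟨?_, ?_, ?_⟩, ?_⟩
  · intro e he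
    obtain ⟨i, -, rfl⟩ := Finset.mem_image.1 he
    exact hacc _ (hc.trans_le (hwg i))
  · intro e he e' he' hee
    obtain ⟨i, -, rfl⟩ := Finset.mem_image.1 he
    obtain ⟨j, -, rfl⟩ := Finset.mem_image.1 he'
    obtain rfl : i = j := Subtype.ext hee
    rfl
  · intro e he e' he' hee
    obtain ⟨i, -, rfl⟩ := Finset.mem_image.1 he
    obtain ⟨j, -, rfl⟩ := Finset.mem_image.1 he'
    obtain rfl : i = j := hginj hee
    rfl
  · rw [weightSum, Finset.sum_image hinj.injOn]
    simpa using Finset.card_nsmul_le_sum Finset.univ _ c fun i _ => hwg i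

/-- If each agent in `K` gives weight at least `c > 0` to its objects in positions below `t`, then
some matching has weight at least `min #K t * c`. -/
theorem exists_isMatching_min_mul_le {I : OSMInstance n} {w : Fin n × Fin n → ℝ}
    (hacc : ∀ e, 0 < w e → e.2 ∈ I.accept e.1) {c : ℝ} (hc : 0 < c)
    (σ : Fin n → Equiv.Perm (Fin n)) (K : Finset (Fin n)) {t : ℝ} (htn : t ≤ n)
    (hw : ∀ i ∈ K, ∀ p : Fin n, (p : ℝ) < t → c ≤ w (i, σ i p)) :
    ∃ μ, I.IsMatching μ ∧ min (K.card : ℝ) t * c ≤ weightSum w μ := by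
  obtain ⟨K', hK'K, hK'⟩ := Finset.exists_subset_card_eq (min_le_left K.card ⌈t⌉₊)
  have htn' : ⌈t⌉₊ ≤ n := Nat.ceil_le.2 htn
  obtain ⟨μ, hμ, hle⟩ := exists_isMatching_card_mul_le hacc hc K'
    (fun i => (Finset.univ.filter fun p : Fin n => (p : ℕ) < ⌈t⌉₊).map (σ i).toEmbedding)
    (fun i _ => by
      rw [hK', Finset.card_map, Fin.card_filter_val_lt, min_eq_right htn']
      exact min_le_right _ _)
    (fun i hi h hh => by
      obtain ⟨p, hp, rfl⟩ := Finset.mem_map.1 hh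
      exact hw i (hK'K hi) p (Nat.lt_ceil.1 (Finset.mem_filter.1 hp).2))
  refine ⟨μ, hμ, le_trans (mul_le_mul_of_nonneg_right ?_ hc.le) hle⟩
  rw [hK', Nat.cast_min]
  exact min_le_min_left _ (Nat.le_ceil t)

/-! ### Positions -/

/-- A sorting key for the objects from the point of view of agent `i`: acceptable objects are
ordered by rank, and unacceptable objects come last. -/
noncomputable def sortKey (I : OSMInstance n) (i h : Fin n) : ℕ :=
  if h ∈ I.accept i then I.edgeRank (i, h) else n + 2

/-- `objAt I i p` is the object in position `p` (counted from `0`) in a fixed ordering of the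
objects by decreasing preference of agent `i`. -/
noncomputable def objAt (I : OSMInstance n) (i : Fin n) : Equiv.Perm (Fin n) :=
  Tuple.sort (I.sortKey i)

theorem Consistent.le_of_sortKey_le {I : OSMInstance n} {v : Fin n → Fin n → ℝ}
    (hv : I.Consistent v) {i h h' : Fin n} (hk : I.sortKey i h ≤ I.sortKey i h') :
    v i h' ≤ v i h := by
  by_cases hh' : h' ∈ I.accept i
  · have hlt : I.sortKey i h' < n + 2 := by
      have := Finset.card_le_univ
        ((I.accept i).filter fun x => I.strictPref i x h')
      simp only [sortKey, hh', if_true, edgeRank]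
      simp only [Fintype.card_fin] at this
      omega
    have hh : h ∈ I.accept i := by
      by_contra hh
      simp only [sortKey, hh, if_false] at hk hlt
      omega
    by_contra! hlt'
    have hnot : ¬ I.pref i h h' := fun hp => hlt'.not_ge ((hv.2.2 i h h' hh hh').1 hp)
    have hpref : I.pref i h' h := (hv.2.2 i h' h hh' hh).2 hlt'.le
    have hss : (I.accept i).filter (fun x => I.strictPref i x h') ⊂
        (I.accept i).filter (fun x => I.strictPref i x h) := by
      refine (Finset.ssubset_iff_of_subset ?_).2 ⟨h', ?_, ?_⟩
      · intro x hx
        obtain ⟨hxa, hx1, hx2⟩ := Finset.mem_filter.1 hx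
        refine Finset.mem_filter.2 ⟨hxa, I.pref_trans i x h' h hxa hh' hh hx1 hpref, fun hc => ?_⟩
        exact hx2 (I.pref_trans i h' h x hh' hh hxa hpref hc)
      · exact Finset.mem_filter.2 ⟨hh', hpref, hnot⟩
      · exact fun hc => (Finset.mem_filter.1 hc).2.2 (I.pref_refl i h' hh')
    have := Finset.card_lt_card hss
    simp only [sortKey, hh, hh', if_true, edgeRank] at hk
    omega
  · rw [hv.2.1 i h' hh']
    exact (hv.1 i h).1

theorem Consistent.antitone_objAt {I : OSMInstance n} {v : Fin n → Fin n → ℝ}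
    (hv : I.Consistent v) (i : Fin n) : Antitone fun p => v i (I.objAt i p) :=
  fun _ _ hpq => hv.le_of_sortKey_le (Tuple.monotone_sort (I.sortKey i) hpq)

theorem UnitSum.sum_objAt {I : OSMInstance n} {v : Fin n → Fin n → ℝ}
    (hs : I.UnitSum v) (hv : I.Consistent v) (i : Fin n) : ∑ p, v i (I.objAt i p) = 1 := by
  rw [Equiv.sum_comp (I.objAt i) (v i), ← hs i]
  exact (Finset.sum_subset (Finset.subset_univ _) fun h _ hh => hv.2.1 i h hh).symm

end OSMInstance

/-! ### Antitone unit-sum vectors -/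

section UnitSumVector

variable {n : ℕ} {u : Fin n → ℝ}

theorem Antitone.le_inv_of_sum_eq_one (hu : Antitone u) (h0 : ∀ p, 0 ≤ u p)
    (hsum : ∑ p, u p = 1) (p : Fin n) : u p ≤ 1 / ((p : ℝ) + 1) := by
  rw [le_div_iff₀ (by positivity), mul_comm]
  calc ((p : ℝ) + 1) * u p = ∑ _q ∈ Finset.Iic p, u p := by simp
    _ ≤ ∑ q ∈ Finset.Iic p, u q := Finset.sum_le_sum fun q hq => hu (Finset.mem_Iic.1 hq)
    _ ≤ ∑ q, u q :=
      Finset.sum_le_sum_of_subset_of_nonneg (Finset.subset_univ _) fun q _ _ => h0 q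
    _ = 1 := hsum

theorem Antitone.sum_le_of_two_levels (hu : Antitone u) (h0 : ∀ p, 0 ≤ u p)
    {z : Fin n} (hz : (z : ℕ) = 0) (p q : Fin n) :
    ∑ x, u x ≤ q * u z + p * u q + n * u p := by
  have hx : ∀ x, u x ≤ (if x < q then u z else 0) + (if x < p then u q else 0) + u p := by
    intro x
    have h1 : u x ≤ u z := hu (Fin.le_def.2 (by omega))
    have := h0 z
    have := h0 p
    have := h0 q
    split_ifs with hq hp hp
    · linarith
    · linarith
    · linarith [hu (not_lt.1 hq)]
    · linarith [hu (not_lt.1 hp)]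
  have hcard : ∀ r : Fin n, (Finset.univ.filter fun x => x < r).card = (r : ℕ) := fun r => by
    rw [← Fin.card_Iio]
    congr 1
    ext
    simp
  calc ∑ x, u x ≤ _ := Finset.sum_le_sum fun x _ => hx x
    _ = _ := by
      simp only [Finset.sum_add_distrib, ← Finset.sum_filter, Finset.sum_const, hcard,
        nsmul_eq_mul, Finset.card_univ, Fintype.card_fin]

end UnitSumVector

/-! ### Certified lower bounds -/

/-- The threshold used for the object in position `p` (counted from `0`); the parameter `a` is
the cube root of the number of agents. -/
noncomputable def positionThreshold (a : ℝ) (p : ℕ) : ℝ :=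
  if p = 0 then 1 / a else 1 / ((p + 1) * a ^ 2)

theorem positionThreshold_pos {a : ℝ} (ha : 0 < a) (p : ℕ) : 0 < positionThreshold a p := by
  unfold positionThreshold
  split_ifs <;> positivity

theorem positionThreshold_le_one {a : ℝ} (ha : 1 ≤ a) (p : ℕ) : positionThreshold a p ≤ 1 := by
  have ha0 : 0 < a := by linarith
  unfold positionThreshold
  split_ifs
  · exact (div_le_one ha0).2 ha
  · rw [div_le_one (by positivity)]
    have : (0 : ℝ) ≤ p := p.cast_nonneg
    nlinarith

theorem inv_le_sq_mul_positionThreshold {a : ℝ} (ha : 1 ≤ a) (p : ℕ) :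
    1 / ((p : ℝ) + 1) ≤ a ^ 2 * positionThreshold a p := by
  have ha0 : 0 < a := by linarith
  unfold positionThreshold
  split_ifs with hp
  · subst hp
    have : a ^ 2 * (1 / a) = a := by field_simp
    rw [this]
    simpa using ha
  · refine le_of_eq ?_
    field_simp

section Certificates

variable {n : ℕ} {u : Fin n → ℝ} {a : ℝ} {z : Fin n}

theorem Antitone.inv_le_first (hu : Antitone u) (h0 : ∀ p, 0 ≤ u p) (hsum : ∑ p, u p = 1)
    (hz : (z : ℕ) = 0) : 1 / (n : ℝ) ≤ u z := by
  have hn : (0 : ℝ) < n := Nat.cast_pos.2 z.pos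
  have := hu.sum_le_of_two_levels h0 hz z z
  rw [div_le_iff₀ hn]
  simp only [hz, hsum, Nat.cast_zero] at this
  linarith

/-- If the largest value is below `1 / a`, then the first `a / 2` values are at least
`1 / (2 * n)`. -/
theorem Antitone.inv_le_of_first_lt (hu : Antitone u) (h0 : ∀ p, 0 ≤ u p)
    (hsum : ∑ p, u p = 1) (ha : 0 < a) (hz : (z : ℕ) = 0) (huz : u z < 1 / a) {p : Fin n}
    (hp : (p : ℝ) < a / 2) : 1 / (2 * (n : ℝ)) ≤ u p := by
  have hn : (0 : ℝ) < n := Nat.cast_pos.2 z.pos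
  have h := hu.sum_le_of_two_levels h0 hz p z
  have h1 : (p : ℝ) * u z ≤ a / 2 * (1 / a) :=
    mul_le_mul hp.le huz.le (h0 z) (by positivity)
  have h2 : a / 2 * (1 / a) = 1 / 2 := by field_simp
  rw [div_le_iff₀ (by positivity)]
  simp only [hz, hsum, Nat.cast_zero] at h
  linarith

/-- If the largest value is below `1 / a` and an early value is below its threshold, then the
first `a ^ 2 / 4` values are at least `1 / (2 * n)`. -/
theorem Antitone.inv_le_of_first_lt_of_lt (hu : Antitone u) (h0 : ∀ p, 0 ≤ u p)
    (hsum : ∑ p, u p = 1) (ha : 0 < a) (hz : (z : ℕ) = 0) (huz : u z < 1 / a) {p q : Fin n}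
    (hqa : (q : ℝ) ≤ a / 4) (huq : u q < 1 / a ^ 2)
    (hp : (p : ℝ) < a ^ 2 / 4) : 1 / (2 * (n : ℝ)) ≤ u p := by
  have hn : (0 : ℝ) < n := Nat.cast_pos.2 z.pos
  have h := hu.sum_le_of_two_levels h0 hz p q
  have h1 : (q : ℝ) * u z ≤ a / 4 * (1 / a) :=
    mul_le_mul hqa huz.le (h0 z) (by positivity)
  have h2 : (p : ℝ) * u q ≤ a ^ 2 / 4 * (1 / a ^ 2) :=
    mul_le_mul hp.le huq.le (h0 q) (by positivity)
  have h3 : a / 4 * (1 / a) = 1 / 4 := by field_simp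
  have h4 : a ^ 2 / 4 * (1 / a ^ 2) = 1 / 4 := by field_simp
  rw [div_le_iff₀ (by positivity)]
  rw [hsum] at h
  linarith

end Certificates

namespace OSMInstance

variable {n : ℕ}

/-- `v` and `v'` give the same answers to all threshold queries. -/
def SameAnswers (I : OSMInstance n) (a : ℝ) (v v' : Fin n → Fin n → ℝ) : Prop :=
  ∀ i (p : Fin n), positionThreshold a p ≤ v' i (I.objAt i p) ↔
    positionThreshold a p ≤ v i (I.objAt i p)

/-- If `w` is at least every lower bound that can be certified from the answers, and `W` is at
least the weight of every matching, then `26 * a ^ 2 * W` bounds the welfare of every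
matching. -/
theorem SW_le_of_certified {I : OSMInstance n} {v : Fin n → Fin n → ℝ} (hv : I.Consistent v)
    (hs : I.UnitSum v) {a : ℝ} (ha : 1 ≤ a) (han : a ^ 3 = n) {w : Fin n × Fin n → ℝ}
    (hw0 : ∀ e, 0 ≤ w e) (hacc : ∀ e, 0 < w e → e.2 ∈ I.accept e.1)
    (hw : ∀ i p c, (∀ v', I.Consistent v' → I.UnitSum v' → I.SameAnswers a v v' →
      c ≤ v' i (I.objAt i p)) → c ≤ w (i, I.objAt i p))
    {W : ℝ} (hW : ∀ μ, I.IsMatching μ → weightSum w μ ≤ W)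
    {μ : Finset (Fin n × Fin n)} (hμ : I.IsMatching μ) : I.SW v μ ≤ 26 * a ^ 2 * W := by
  have ha0 : 0 < a := by linarith
  have hn : (0 : ℝ) < n := han ▸ by positivity
  have hn1 : 0 < n := Nat.cast_pos.1 hn
  have hc : (0 : ℝ) < 1 / (2 * n) := by positivity
  set z : Fin n := ⟨0, hn1⟩ with hz
  have hz0 : (z : ℕ) = 0 := rfl
  have hTz : positionThreshold a (z : ℕ) = 1 / a := by simp [positionThreshold, hz0]
  have hTle : ∀ q : ℕ, q ≠ 0 → positionThreshold a q ≤ 1 / a ^ 2 := by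
    intro q hq
    rw [positionThreshold, if_neg hq]
    apply one_div_le_one_div_of_le (by positivity)
    nlinarith [(q.cast_nonneg : (0 : ℝ) ≤ q), sq_nonneg a]
  have hyes : ∀ i (p : Fin n), positionThreshold a p ≤ v i (I.objAt i p) →
      positionThreshold a p ≤ w (i, I.objAt i p) := fun i p hp =>
    hw i p _ fun v' _ _ hsame => (hsame i p).2 hp
  have hno : ∀ {v'}, I.SameAnswers a v v' → ∀ {i} {p : Fin n},
      v i (I.objAt i p) < positionThreshold a p → v' i (I.objAt i p) < positionThreshold a p := fun hsame i p hp =>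
    not_le.1 fun hc => hp.not_ge ((hsame i p).1 hc)
  have hfirst : ∀ i, 1 / (n : ℝ) ≤ w (i, I.objAt i z) := fun i =>
    hw i z _ fun v' hv' hs' _ => (hv'.antitone_objAt i).inv_le_first (fun _ => (hv'.1 _ _).1)
      (hs'.sum_objAt hv' i) hz0
  have hW0 : 0 ≤ W := by simpa [weightSum] using hW ∅ (by simp [IsMatching])
  set Y : Finset (Fin n) := Finset.univ.filter fun i => 1 / a ≤ v i (I.objAt i z) with hY
  set F : Finset (Fin n) := Finset.univ.filter fun i => v i (I.objAt i z) < 1 / a ∧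
    ∃ q : Fin n, (q : ℕ) ≠ 0 ∧ (q : ℝ) ≤ a / 4 ∧ v i (I.objAt i q) < positionThreshold a q with hF
  have hYW : Y.Nonempty → 1 / a ≤ W := by
    rintro ⟨i, hi⟩
    have hwi : 1 / a ≤ w (i, I.objAt i z) :=
      hTz ▸ hyes i z (hTz.symm ▸ (Finset.mem_filter.1 hi).2)
    refine hwi.trans ?_
    simpa [weightSum] using hW {(i, I.objAt i z)} ⟨by
      simpa using hacc _ (lt_of_lt_of_le (by positivity) hwi), by simp, by simp⟩
  have hbase : 1 ≤ 4 * a ^ 2 * W := by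
    by_cases hYn : Y.Nonempty
    · have h1 := hYW hYn
      rw [div_le_iff₀ ha0] at h1
      nlinarith
    · obtain ⟨ν, hν, hle⟩ := exists_isMatching_min_mul_le (I := I) hacc hc I.objAt Finset.univ
        (t := a / 2) (by rw [← han]; nlinarith [mul_nonneg (sub_nonneg.2 ha) ha0.le])
        (fun i _ p hp => hw i p _ fun v' hv' hs' hsame =>
          (hv'.antitone_objAt i).inv_le_of_first_lt (fun _ => (hv'.1 _ _).1)
            (hs'.sum_objAt hv' i) ha0 hz0 (by
              have hi : v i (I.objAt i z) < positionThreshold a z := by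
                rw [hTz]
                by_contra! hi
                exact hYn ⟨i, by simpa [hY] using hi⟩
              exact hTz ▸ hno hsame hi) hp)
      have h1 := hle.trans (hW ν hν)
      rw [Finset.card_univ, Fintype.card_fin, min_eq_right
        (by rw [← han]; nlinarith [mul_nonneg (sub_nonneg.2 ha) ha0.le]), ← han,
        mul_one_div, div_le_iff₀ (by positivity)] at h1
      nlinarith
  have hYsum : (Y.card : ℝ) / a ^ 2 ≤ a ^ 2 * W := by
    by_cases hYn : Y.Nonempty
    · have h1 := hYW hYn
      have h2 : (Y.card : ℝ) ≤ a ^ 3 := by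
        rw [han]; exact_mod_cast (Finset.card_le_univ Y).trans_eq (Fintype.card_fin n)
      rw [div_le_iff₀ ha0] at h1
      rw [div_le_iff₀ (by positivity)]
      calc (Y.card : ℝ) ≤ a ^ 3 * 1 := by linarith
        _ ≤ a ^ 3 * (W * a) := by gcongr
        _ = _ := by ring
    · rw [Finset.not_nonempty_iff_eq_empty.1 hYn]
      simp only [Finset.card_empty, Nat.cast_zero, zero_div]
      positivity
  have hFsum : (F.card : ℝ) / a ^ 2 ≤ 8 * a ^ 2 * W := by
    obtain ⟨ν, hν, hle⟩ := exists_isMatching_min_mul_le (I := I) hacc hc I.objAt F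
      (t := a ^ 2 / 4) (by rw [← han]; nlinarith [mul_nonneg (sub_nonneg.2 ha) (sq_nonneg a)])
      (fun i hi p hp => hw i p _ fun v' hv' hs' hsame => by
        obtain ⟨-, hiz, q, hq0, hqa, hiq⟩ := Finset.mem_filter.1 hi
        exact (hv'.antitone_objAt i).inv_le_of_first_lt_of_lt (fun _ => (hv'.1 _ _).1)
          (hs'.sum_objAt hv' i) ha0 hz0 (hTz ▸ hno hsame (hTz.symm ▸ hiz)) hqa
          ((hno hsame hiq).trans_le (hTle q hq0)) hp)
    have h1 := hle.trans (hW ν hν)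
    rw [← han, mul_one_div, div_le_iff₀ (by positivity)] at h1
    rw [div_le_iff₀ (by positivity)]
    have h2 : (F.card : ℝ) ≤ a ^ 3 := by
      rw [han]; exact_mod_cast (Finset.card_le_univ F).trans_eq (Fintype.card_fin n)
    have h3 : a ^ 3 * W ≤ a ^ 4 * W := by
      apply mul_le_mul_of_nonneg_right _ hW0
      exact pow_le_pow_right₀ ha (by norm_num)
    have h4 : 0 ≤ a ^ 4 * W := by positivity
    rcases le_total (F.card : ℝ) (a ^ 2 / 4) with hcase | hcase
    · rw [min_eq_left hcase] at h1
      nlinarith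
    · rw [min_eq_right hcase] at h1
      have h5 : a * (a ^ 2 / 4) ≤ a * (W * (2 * a ^ 3)) := by gcongr
      nlinarith
  have hedge : ∀ e ∈ μ, v e.1 e.2 ≤ a ^ 2 * w e +
      (4 / n + (if e.1 ∈ Y then 1 / a ^ 2 else 0) + (if e.1 ∈ F then 1 / a ^ 2 else 0)) := by
    rintro ⟨i, h⟩ -
    obtain ⟨p, rfl⟩ := (I.objAt i).surjective h
    have hwe : 0 ≤ a ^ 2 * w (i, I.objAt i p) := mul_nonneg (sq_nonneg a) (hw0 _)
    have h4n : (0 : ℝ) ≤ 4 / n := by positivity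
    have hYi : (0 : ℝ) ≤ if i ∈ Y then 1 / a ^ 2 else 0 := by split_ifs <;> positivity
    have hFi : (0 : ℝ) ≤ if i ∈ F then 1 / a ^ 2 else 0 := by split_ifs <;> positivity
    dsimp only
    rcases le_or_gt (positionThreshold a p) (v i (I.objAt i p)) with hy | hlt
    · have h1 := (hv.antitone_objAt i).le_inv_of_sum_eq_one (fun _ => (hv.1 _ _).1)
        (hs.sum_objAt hv i) p
      have h2 := inv_le_sq_mul_positionThreshold ha p
      have h3 := mul_le_mul_of_nonneg_left (hyes i p hy) (sq_nonneg a)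
      linarith
    by_cases hp0 : (p : ℕ) = 0
    · obtain rfl : p = z := Fin.ext hp0
      have h1 := mul_le_mul_of_nonneg_left (hfirst i) (sq_nonneg a)
      have h2 : a ^ 2 * (1 / (n : ℝ)) = 1 / a := by rw [← han]; field_simp
      rw [hTz] at hlt
      linarith
    have hle := hlt.le.trans (hTle p hp0)
    by_cases hpa : (p : ℝ) ≤ a / 4
    · by_cases hiY : i ∈ Y
      · rw [if_pos hiY]
        linarith
      · have hiF : i ∈ F := by
          refine Finset.mem_filter.2 ⟨Finset.mem_univ _, ?_, p, hp0, hpa, hlt⟩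
          simpa [hY] using hiY
        rw [if_pos hiF]
        linarith
    · have h1 : positionThreshold a p ≤ 4 / n := by
        rw [positionThreshold, if_neg hp0, ← han, div_le_div_iff₀ (by positivity) (by positivity)]
        have : a ≤ 4 * ((p : ℝ) + 1) := by linarith
        nlinarith [mul_le_mul_of_nonneg_right this (sq_nonneg a)]
      linarith
  have hagent := hμ.sum_agent_le
    (c := fun i => 4 / n + (if i ∈ Y then 1 / a ^ 2 else 0) + (if i ∈ F then 1 / a ^ 2 else 0))
    (fun i => by split_ifs <;> positivity)
  have hsum : ∑ i : Fin n, ((4 : ℝ) / n + (if i ∈ Y then 1 / a ^ 2 else 0) +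
      (if i ∈ F then 1 / a ^ 2 else 0)) = 4 + Y.card / a ^ 2 + F.card / a ^ 2 := by
    simp only [Finset.sum_add_distrib, Finset.sum_ite_mem, Finset.univ_inter, Finset.sum_const,
      Finset.card_univ, Fintype.card_fin, nsmul_eq_mul]
    field_simp
  have hwμ := mul_le_mul_of_nonneg_left (hW μ hμ) (sq_nonneg a)
  have htotal := Finset.sum_le_sum hedge
  rw [Finset.sum_add_distrib, ← Finset.mul_sum] at htotal
  unfold weightSum at hwμ
  unfold SW
  linarith

/-- The profiles that are possible when the threshold queries `T` are answered by `b`. -/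
def compatibleProfiles (I : OSMInstance n) (T : Fin n → Fin n → ℝ) (b : Fin n → Fin n → Bool) :
    Set (Fin n → Fin n → ℝ) :=
  {v | I.Consistent v ∧ I.UnitSum v ∧ (fun i j => decide (T i j ≤ v i j)) = b}

/-- The largest lower bound on the value of the edge `e` that follows from the answers `b`. -/
noncomputable def certifiedValue (I : OSMInstance n) (T : Fin n → Fin n → ℝ)
    (b : Fin n → Fin n → Bool) (e : Fin n × Fin n) : ℝ :=
  ⨅ v : I.compatibleProfiles T b, v.1 e.1 e.2

theorem certifiedValue_nonneg (I : OSMInstance n) (T : Fin n → Fin n → ℝ)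
    (b : Fin n → Fin n → Bool) (e : Fin n × Fin n) : 0 ≤ I.certifiedValue T b e :=
  Real.iInf_nonneg fun v => (v.2.1.1 _ _).1

theorem certifiedValue_le {I : OSMInstance n} {T : Fin n → Fin n → ℝ}
    {b : Fin n → Fin n → Bool} {v : Fin n → Fin n → ℝ} (hv : v ∈ I.compatibleProfiles T b)
    (e : Fin n × Fin n) : I.certifiedValue T b e ≤ v e.1 e.2 :=
  ciInf_le (f := fun v : I.compatibleProfiles T b => v.1 e.1 e.2)
    ⟨0, by rintro _ ⟨v, rfl⟩; exact (v.2.1.1 _ _).1⟩ ⟨v, hv⟩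

/-- The threshold matrix of the algorithm. -/
noncomputable def thresholdMatrix (I : OSMInstance n) (i j : Fin n) : ℝ :=
  positionThreshold ((n : ℝ) ^ ((1 : ℝ) / 3)) ((I.objAt i).symm j : Fin n)

end OSMInstance

/-- there is a non-adaptive deterministic algorithm asking one binary
threshold query per (agent, object) pair that always outputs a Pareto optimal matching
achieving an `O(n^(2/3))`-approximation to the optimal welfare among Pareto optimal
matchings for unit-sum valuations. -/
theorem nonadaptive_PO_unitSum_upper_bound :
    ∃ C : ℝ, 0 < C ∧ ∀ n : ℕ, ∀ I : OSMInstance n,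
      ∃ T : Fin n → Fin n → ℝ, (∀ i j, 0 ≤ T i j ∧ T i j ≤ 1) ∧
      ∃ f : (Fin n → Fin n → Bool) → Finset (Fin n × Fin n),
        (∀ b, I.IsMatching (f b)) ∧
        ∀ v : Fin n → Fin n → ℝ, I.Consistent v → I.UnitSum v →
          I.ParetoOptimal (f (fun i j => decide (T i j ≤ v i j))) ∧
          ∀ μstar, I.ParetoOptimal μstar →
            I.SW v μstar ≤
              C * (n : ℝ) ^ ((2 : ℝ) / 3) *
                I.SW v (f (fun i j => decide (T i j ≤ v i j))) := by
  refine ⟨26, by norm_num, fun n I => ⟨I.thresholdMatrix, fun i _ => ?_, ?_⟩⟩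
  · have ha : 1 ≤ (n : ℝ) ^ ((1 : ℝ) / 3) :=
      Real.one_le_rpow (Nat.one_le_cast.2 i.pos) (by norm_num)
    exact ⟨(positionThreshold_pos (by linarith) _).le, positionThreshold_le_one ha _⟩
  · choose M hM using fun b => I.exists_isMaxWeightMatching (I.certifiedValue I.thresholdMatrix b)
    choose f hf hfM using fun b => (hM b).1.exists_paretoOptimal_weakImprove
    refine ⟨f, fun b => (hf b).1, fun v hv hs => ⟨hf _, fun μ hμ => ?_⟩⟩
    rcases Nat.eq_zero_or_pos n with rfl | hn
    · simp [OSMInstance.SW, Finset.eq_empty_of_isEmpty]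
    set b : Fin n → Fin n → Bool := fun i j => decide (I.thresholdMatrix i j ≤ v i j) with hb
    set a : ℝ := (n : ℝ) ^ ((1 : ℝ) / 3) with ha
    have hvb : v ∈ I.compatibleProfiles I.thresholdMatrix b := ⟨hv, hs, rfl⟩
    have ha1 : 1 ≤ a := Real.one_le_rpow (Nat.one_le_cast.2 hn) (by norm_num)
    have han : a ^ 3 = n := by
      rw [ha, ← Real.rpow_mul_natCast n.cast_nonneg]
      norm_num
    have ha2 : (n : ℝ) ^ ((2 : ℝ) / 3) = a ^ 2 := by
      rw [ha, ← Real.rpow_mul_natCast n.cast_nonneg]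
      norm_num
    have hbound : I.SW v μ ≤ 26 * a ^ 2 *
        OSMInstance.weightSum (I.certifiedValue I.thresholdMatrix b) (M b) := by
      refine OSMInstance.SW_le_of_certified hv hs ha1 han (I.certifiedValue_nonneg _ _) ?_ ?_
        (hM b).2 hμ.1
      · intro e he
        by_contra hacc
        have := OSMInstance.certifiedValue_le hvb e
        rw [hv.2.1 _ _ hacc] at this
        linarith
      · intro i p c hc
        have : Nonempty (I.compatibleProfiles I.thresholdMatrix b) := ⟨⟨v, hvb⟩⟩
        refine le_ciInf fun v' => hc v'.1 v'.2.1 v'.2.2.1 fun i p => ?_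
        have h := congrFun (congrFun v'.2.2.2 i) (I.objAt i p)
        simpa [hb, OSMInstance.thresholdMatrix, ha] using h
    rw [ha2]
    refine hbound.trans (mul_le_mul_of_nonneg_left ?_ (by positivity))
    calc OSMInstance.weightSum (I.certifiedValue I.thresholdMatrix b) (M b)
        ≤ I.SW v (M b) := Finset.sum_le_sum fun e _ => OSMInstance.certifiedValue_le hvb e
      _ ≤ I.SW v (f b) := OSMInstance.SW_le_of_weakImprove hv (hM b).1 (hf b).1 (hfM b)
end

section
/- Let X be one of the properties: Pareto optimal, rank-maximal, max-cardinality rank-maximal, fair. For every n ≥ 18 the following holds: for every family, indexed by instances I with n agents and n objects, of pairs (T_I, f_I) — where T_I assigns to each pair (a_i, h_j) a threshold T_I(a_i, h_j) ∈ [0,1] and f_I maps {0,1}-valued n×n answer matrices to matchings of G_I — such that f_I(b_v) satisfies X for every instance I and every unit-sum valuation profile v consistent with I (where b_v(i,j) = 1 iff v_i(h_j) ≥ T_I(a_i, h_j)), there exist an instance I with n agents and n objects and a unit-sum valuation profile v consistent with I such that max{SW(μ' | v) : μ' a matching of G_I satisfying X} ≥ (√n/64)·SW(f_I(b_v) | v).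 -/
open Finset
open scoped Classical

/-! ### Lexicographic comparison and matchings sharing their objects -/

theorem LexLe.of_le {len : ℕ} {f g : ℕ → ℤ} (h : ∀ j, f j ≤ g j) : LexLe len f g := by
  by_cases hall : ∀ j < len, f j = g j
  · exact Or.inl hall
  · have hex : ∃ j, j < len ∧ f j ≠ g j := by
      by_contra hcon
      exact hall fun j hj => by_contra fun hne => hcon ⟨j, hj, hne⟩
    refine Or.inr ⟨Nat.find hex, (Nat.find_spec hex).1, fun i hi => ?_,
      lt_of_le_of_ne (h _) (Nat.find_spec hex).2⟩
    by_contra hne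
    exact Nat.find_min hex hi ⟨hi.trans (Nat.find_spec hex).1, hne⟩

theorem SatisfiesProp.isMatching {n : ℕ} {X : MatchProp} {I : OSMInstance n}
    {μ : Finset (Fin n × Fin n)} (h : SatisfiesProp X I μ) : I.IsMatching μ := by
  cases X <;> exact h.1

namespace OSMInstance

variable {n : ℕ}

theorem IsMatching.injOn_snd {I : OSMInstance n} {μ : Finset (Fin n × Fin n)}
    (h : I.IsMatching μ) : Set.InjOn Prod.snd (μ : Set (Fin n × Fin n)) :=
  fun e he e' he' hee' => h.2.2 e he e' he' hee'

theorem IsMatching.card_le {I : OSMInstance n} {μ ν : Finset (Fin n × Fin n)}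
    (hν : I.IsMatching ν) (hsub : ν.image Prod.snd ⊆ μ.image Prod.snd) :
    ν.card ≤ μ.card := by
  rw [← card_image_of_injOn hν.injOn_snd]
  exact (card_le_card hsub).trans card_image_le

/-- If ranks depend only on the object, a matching using fewer objects has pointwise
smaller signature. -/
theorem IsMatching.sig_le {I : OSMInstance n} {μ ν : Finset (Fin n × Fin n)}
    {ρ : Fin n → ℕ} (hρ : ∀ e, I.edgeRank e = ρ e.2) (hν : I.IsMatching ν)
    (hsub : ν.image Prod.snd ⊆ μ.image Prod.snd) (r : ℕ) : I.sig ν r ≤ I.sig μ r := by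
  unfold sig
  rw [← card_image_of_injOn (hν.injOn_snd.mono (coe_subset.2 (filter_subset _ _)))]
  refine Nat.cast_le.2 (le_trans (card_le_card ?_)
    (card_image_le (f := Prod.snd) (s := μ.filter fun e => I.edgeRank e = r)))
  intro j hj
  simp only [mem_image, mem_filter, hρ] at hj ⊢
  obtain ⟨e, ⟨he, her⟩, rfl⟩ := hj
  obtain ⟨e', he', hee'⟩ := mem_image.1 (hsub (mem_image_of_mem _ he))
  exact ⟨e', ⟨he', by rw [hee', her]⟩, hee'⟩

/-- If the preferences of all agents are represented by one positive weight function on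
objects, a matching using every object that some matching can use is Pareto optimal. -/
theorem IsMatching.paretoOptimal_of_cover {I : OSMInstance n} {μ : Finset (Fin n × Fin n)}
    {w : Fin n → ℕ} (hw : ∀ j, 0 < w j) (hpref : ∀ i j k, I.pref i j k ↔ w k ≤ w j)
    (hμ : I.IsMatching μ)
    (hcov : ∀ ν, I.IsMatching ν → ν.image Prod.snd ⊆ μ.image Prod.snd) :
    I.ParetoOptimal μ := by
  refine ⟨hμ, ?_⟩
  rintro ⟨ν, hν, hweak, i₀, hstrict⟩
  let u : Finset (Fin n × Fin n) → Fin n → ℕ := fun κ i =>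
    ∑ e ∈ κ.filter (fun e => e.1 = i), w e.2
  have hu : ∀ κ, I.IsMatching κ → ∀ i h, (i, h) ∈ κ → u κ i = w h := by
    intro κ hκ i h hih
    have hs : κ.filter (fun e => e.1 = i) = {(i, h)} := by
      ext e
      simp only [mem_filter, mem_singleton]
      constructor
      · rintro ⟨he, hei⟩
        exact hκ.2.1 e he _ hih hei
      · rintro rfl
        exact ⟨hih, rfl⟩
    simp [u, hs]
  have hu0 : ∀ κ i, I.Unmatched κ i → u κ i = 0 := by
    intro κ i hun
    refine sum_eq_zero fun e he => ?_
    obtain ⟨heκ, rfl⟩ := mem_filter.1 he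
    exact absurd heκ (hun e.2)
  have htotal : ∀ κ, I.IsMatching κ → ∑ i, u κ i = ∑ j ∈ κ.image Prod.snd, w j := by
    intro κ hκ
    rw [sum_image hκ.injOn_snd]
    exact sum_fiberwise κ (fun e => e.1) fun e => w e.2
  have hle : ∀ i, u μ i ≤ u ν i := by
    intro i
    rcases hweak i with hun | ⟨h, h', hh, hh', hp⟩
    · simp [hu0 μ i hun]
    · rw [hu μ hμ i h hh, hu ν hν i h' hh']
      exact (hpref _ _ _).1 hp
  have hlt : u μ i₀ < u ν i₀ := by
    rcases hstrict with ⟨hun, h', hh'⟩ | ⟨h, h', hh, hh', _, hp⟩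
    · rw [hu0 μ i₀ hun, hu ν hν i₀ h' hh']
      exact hw _
    · rw [hu μ hμ i₀ h hh, hu ν hν i₀ h' hh']
      exact not_le.1 fun hcon => hp ((hpref _ _ _).2 hcon)
  have h₁ : ∑ i, u μ i < ∑ i, u ν i :=
    sum_lt_sum (fun i _ => hle i) ⟨i₀, mem_univ _, hlt⟩
  rw [htotal μ hμ, htotal ν hν] at h₁
  exact absurd (sum_le_sum_of_subset (hcov ν hν)) (not_le.2 h₁)

/-! ### Instances with two universally preferred objects -/

/-- The weight representing the common preference `c ≻ d ≻` everything else. -/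
def chainWeight (c d k : Fin n) : ℕ :=
  if k = c then 3 else if k = d then 2 else 1

theorem chainWeight_pos (c d k : Fin n) : 0 < chainWeight c d k := by
  unfold chainWeight
  split_ifs <;> norm_num

/-- Agent `i` accepts exactly `c`, `d` and `grp i`, in this order of preference. -/
def chainInstance (c d : Fin n) (grp : Fin n → Fin n) : OSMInstance n where
  accept i := {c, d, grp i}
  accept_nonempty i := ⟨c, by simp⟩
  pref _ j k := chainWeight c d k ≤ chainWeight c d j
  pref_refl _ _ _ := le_rfl
  pref_trans _ _ _ _ _ _ _ h₁ h₂ := h₂.trans h₁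
  pref_total _ _ _ _ _ := le_total _ _

theorem chainInstance_edgeRank (c d : Fin n) (grp : Fin n → Fin n) (e : Fin n × Fin n) :
    (chainInstance c d grp).edgeRank e =
      (univ.filter fun k => chainWeight c d e.2 < chainWeight c d k).card + 1 := by
  unfold edgeRank
  congr 2
  ext k
  simp only [chainInstance, strictPref, mem_filter, mem_insert, mem_singleton, mem_univ,
    true_and, not_le]
  constructor
  · exact fun h => h.2.2
  · intro h
    refine ⟨?_, h.le, h⟩
    have := chainWeight_pos c d e.2
    by_contra hk
    push Not at hk
    have hk1 : chainWeight c d k = 1 := by simp [chainWeight, hk.1, hk.2.1]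
    omega

/-- A matching using every acceptable object of `chainInstance` has all four properties. -/
theorem chainInstance_satisfiesProp (X : MatchProp) {c d : Fin n} {grp : Fin n → Fin n}
    {μ : Finset (Fin n × Fin n)} (hμ : (chainInstance c d grp).IsMatching μ)
    (hc : c ∈ μ.image Prod.snd) (hd : d ∈ μ.image Prod.snd)
    (hg : ∀ i, grp i ∈ μ.image Prod.snd) : SatisfiesProp X (chainInstance c d grp) μ := by
  have hcov : ∀ ν, (chainInstance c d grp).IsMatching ν →
      ν.image Prod.snd ⊆ μ.image Prod.snd := by
    intro ν hν j hj
    obtain ⟨e, he, rfl⟩ := mem_image.1 hj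
    have := hν.1 e he
    simp only [chainInstance, mem_insert, mem_singleton] at this
    rcases this with h | h | h <;> rw [h]
    exacts [hc, hd, hg _]
  obtain ⟨ρ, hρ⟩ : ∃ ρ : Fin n → ℕ, ∀ e, (chainInstance c d grp).edgeRank e = ρ e.2 :=
    ⟨fun j => (univ.filter fun k => chainWeight c d j < chainWeight c d k).card + 1,
      chainInstance_edgeRank c d grp⟩
  cases X with
  | po =>
    exact hμ.paretoOptimal_of_cover (chainWeight_pos c d) (fun _ _ _ => Iff.rfl) hcov
  | rm =>
    exact ⟨hμ, fun ν hν => LexLe.of_le fun j =>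
      hν.sig_le hρ (hcov ν hν) (j + 1)⟩
  | mcrm =>
    refine ⟨hμ, fun ν hν => LexLe.of_le fun j => ?_⟩
    split_ifs
    · exact_mod_cast hν.card_le (hcov ν hν)
    · exact hν.sig_le hρ (hcov ν hν) j
  | fair =>
    refine ⟨hμ, fun ν hν => ?_⟩
    rcases (hν.card_le (hcov ν hν)).lt_or_eq with hlt | heq
    · exact Or.inr ⟨0, by omega, by simp, by simpa using hlt⟩
    · have himg : ν.image Prod.snd = μ.image Prod.snd := by
        refine eq_of_subset_of_card_le (hcov ν hν) ?_
        rw [card_image_of_injOn hν.injOn_snd, card_image_of_injOn hμ.injOn_snd, heq]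
      refine Or.inl fun j _ => ?_
      dsimp only
      split_ifs
      · rw [heq]
      · rw [le_antisymm (hν.sig_le hρ himg.subset _)
          (hμ.sig_le hρ himg.symm.subset _)]

/-- Valuations on `chainInstance c d grp`: agent `i` values `grp i` at `x i`, `d` at
`1 - a i`, and `c` at the remaining `a i - x i`. -/
noncomputable def chainVal (c d : Fin n) (grp : Fin n → Fin n) (a x : Fin n → ℝ)
    (i j : Fin n) : ℝ :=
  if j = c then a i - x i else if j = d then 1 - a i else if j = grp i then x i else 0

variable {c d : Fin n} {grp : Fin n → Fin n} {a x : Fin n → ℝ}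

theorem chainVal_unitSum (hcd : c ≠ d) (hc : ∀ i, grp i ≠ c) (hd : ∀ i, grp i ≠ d) :
    (chainInstance c d grp).UnitSum (chainVal c d grp a x) := by
  intro i
  have h₁ : c ∉ ({d, grp i} : Finset (Fin n)) := by simp [hcd, (hc i).symm]
  have h₂ : d ∉ ({grp i} : Finset (Fin n)) := by simp [(hd i).symm]
  simp only [chainInstance]
  rw [sum_insert h₁, sum_insert h₂, sum_singleton]
  simp [chainVal, hcd.symm, hc i, hd i]

theorem chainVal_consistent (hcd : c ≠ d) (hc : ∀ i, grp i ≠ c) (hd : ∀ i, grp i ≠ d)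
    (ha : ∀ i, 5 / 8 ≤ a i ∧ a i ≤ 3 / 4) (hx : ∀ i, 0 ≤ x i ∧ x i ≤ 1 / 8) :
    (chainInstance c d grp).Consistent (chainVal c d grp a x) := by
  refine ⟨fun i h => ?_, fun i h hh => ?_, fun i h h' hh hh' => ?_⟩
  · have := ha i
    have := hx i
    unfold chainVal
    split_ifs <;> constructor <;> linarith
  · simp only [chainInstance, mem_insert, mem_singleton, not_or] at hh
    simp [chainVal, hh.1, hh.2.1, hh.2.2]
  · have h₁ := ha i
    have h₂ := hx i
    have h₃ : ¬ a i - x i ≤ 1 - a i := by linarith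
    have h₄ : ¬ a i - x i ≤ x i := by linarith
    have h₅ : ¬ 1 - a i ≤ x i := by linarith
    have h₆ := (not_le.1 h₃).le
    have h₇ := (not_le.1 h₄).le
    have h₈ := (not_le.1 h₅).le
    simp only [chainInstance, mem_insert, mem_singleton] at hh hh' ⊢
    rcases hh with rfl | rfl | rfl <;> rcases hh' with rfl | rfl | rfl <;>
      simp [chainVal, chainWeight, hcd.symm, hc i, hd i, h₃, h₄, h₅, h₆, h₇, h₈,
        -tsub_le_iff_right]

/-- Changing `x` does not change the answer to a threshold query when the thresholds for
`c` avoid the range of `a i - x i` and those for `grp i` do not separate the two values. -/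
theorem threshold_chainVal_iff {y : Fin n → ℝ} {T : Fin n → Fin n → ℝ}
    (hx : ∀ i, 0 ≤ x i ∧ x i ≤ 1 / 8) (hy : ∀ i, 0 ≤ y i ∧ y i ≤ 1 / 8)
    (ha : ∀ i, T i c ≤ a i - 1 / 8 ∨ a i < T i c)
    (hxy : ∀ i, T i (grp i) ≤ x i ↔ T i (grp i) ≤ y i) (i j : Fin n) :
    T i j ≤ chainVal c d grp a x i j ↔ T i j ≤ chainVal c d grp a y i j := by
  unfold chainVal
  split_ifs with h₁ h₂ h₃
  · subst h₁
    have := hx i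
    have := hy i
    rcases ha i with h | h
    · constructor <;> intro <;> linarith
    · constructor <;> intro <;> linarith
  · exact Iff.rfl
  · rw [h₃]
    exact hxy i
  · exact Iff.rfl

/-- An upper bound on the welfare of a matching which only leaves values at most `lo` on
the objects of `S` and no value on the other group objects. -/
theorem chainVal_SW_le (hcd : c ≠ d) (ha : ∀ i, 5 / 8 ≤ a i ∧ a i ≤ 3 / 4)
    (hx : ∀ i, 0 ≤ x i) {M : Finset (Fin n × Fin n)}
    (hM : (chainInstance c d grp).IsMatching M) {S : Finset (Fin n)} {lo : ℝ} (hlo : 0 ≤ lo)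
    (hval : ∀ i, (i, grp i) ∈ M → x i ≤ if grp i ∈ S then lo else 0) :
    (chainInstance c d grp).SW (chainVal c d grp a x) M ≤ 2 + S.card * lo := by
  let b : Fin n → ℝ := fun j =>
    (if j = c then 1 else 0) + (if j = d then 1 else 0) + (if j ∈ S then lo else 0)
  have hS : ∀ j, 0 ≤ if j ∈ S then lo else 0 := fun j => by split_ifs <;> simp [hlo]
  have hb : ∀ j, 0 ≤ b j := by
    intro j
    have := hS j
    simp only [b]
    split_ifs at * <;> linarith
  have hle : ∀ e ∈ M, chainVal c d grp a x e.1 e.2 ≤ b e.2 := by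
    intro e he
    have h₁ := ha e.1
    have h₂ := hx e.1
    have h₃ := hS e.2
    have hacc := hM.1 e he
    simp only [chainInstance, mem_insert, mem_singleton] at hacc
    by_cases hec : e.2 = c
    · simp only [chainVal, b, hec, if_true] at h₃ ⊢
      simp only [hcd, if_false]
      linarith
    · by_cases hed : e.2 = d
      · simp only [chainVal, b, hed, if_true, if_false, hcd.symm] at h₃ ⊢
        linarith
      · have hg : e.2 = grp e.1 := by tauto
        have hmem : (e.1, grp e.1) ∈ M := by
          rw [← hg]
          exact he
        have := hval e.1 hmem
        simp only [chainVal, b, hec, hed, if_false, ← hg, if_true, zero_add] at this ⊢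
        exact this
  calc (chainInstance c d grp).SW (chainVal c d grp a x) M
      ≤ ∑ e ∈ M, b e.2 := sum_le_sum hle
    _ = ∑ j ∈ M.image Prod.snd, b j := (sum_image hM.injOn_snd).symm
    _ ≤ ∑ j, b j := sum_le_sum_of_subset_of_nonneg (subset_univ _) fun j _ _ => hb j
    _ = 2 + S.card * lo := by
      simp only [b, sum_add_distrib, sum_ite_eq', mem_univ, if_true, sum_ite_mem,
        univ_inter, sum_const, nsmul_eq_mul]
      ring

/-- If `win g` and `lose g` are distinct agents of group `g` for all `g ∈ G`, some
matching having property `X` hands each `g ∈ G` to `win g`. -/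
theorem exists_chainInstance_satisfiesProp (X : MatchProp) (hcd : c ≠ d)
    (hc : ∀ i, grp i ≠ c) (hd : ∀ i, grp i ≠ d) {G : Finset (Fin n)} (hG : 1 < G.card)
    (hgrp : ∀ i, grp i ∈ G) {win lose : Fin n → Fin n} (hwin : ∀ g ∈ G, grp (win g) = g)
    (hlose : ∀ g ∈ G, grp (lose g) = g) (hne : ∀ g ∈ G, win g ≠ lose g) :
    ∃ μ, SatisfiesProp X (chainInstance c d grp) μ ∧ ∀ g ∈ G, (win g, g) ∈ μ := by
  obtain ⟨g₁, hg₁, g₂, hg₂, hg₁₂⟩ := one_lt_card.1 hG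
  have hwl : ∀ g ∈ G, ∀ g' ∈ G, win g ≠ lose g' := by
    intro g hg g' hg' h
    have hgg' : g = g' := by rw [← hwin g hg, h, hlose g' hg']
    exact hne g hg (hgg' ▸ h)
  have hll : lose g₁ ≠ lose g₂ := by
    intro h
    exact hg₁₂ (by rw [← hlose g₁ hg₁, h, hlose g₂ hg₂])
  have hww : ∀ g ∈ G, ∀ g' ∈ G, win g = win g' → g = g' := by
    intro g hg g' hg' h
    rw [← hwin g hg, h, hwin g' hg']
  have hGc : ∀ g ∈ G, g ≠ c := fun g hg => hwin g hg ▸ hc _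
  have hGd : ∀ g ∈ G, g ≠ d := fun g hg => hwin g hg ▸ hd _
  let μ : Finset (Fin n × Fin n) :=
    insert (lose g₁, c) (insert (lose g₂, d) (G.image fun g => (win g, g)))
  have hmem : ∀ e, e ∈ μ ↔
      e = (lose g₁, c) ∨ e = (lose g₂, d) ∨ ∃ g ∈ G, (win g, g) = e := by
    intro e
    simp [μ]
  have hμG : ∀ g ∈ G, (win g, g) ∈ μ := fun g hg => (hmem _).2 (Or.inr (Or.inr ⟨g, hg, rfl⟩))
  have hμ : (chainInstance c d grp).IsMatching μ := by
    refine ⟨fun e he => ?_, fun e he e' he' h => ?_, fun e he e' he' h => ?_⟩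
    · rcases (hmem e).1 he with rfl | rfl | ⟨g, hg, rfl⟩
      · simp [chainInstance]
      · simp [chainInstance]
      · simp [chainInstance, hwin g hg]
    · rcases (hmem e).1 he with rfl | rfl | ⟨g, hg, rfl⟩ <;>
        rcases (hmem e').1 he' with rfl | rfl | ⟨g', hg', rfl⟩
      · rfl
      · exact absurd h hll
      · exact absurd h.symm (hwl g' hg' g₁ hg₁)
      · exact absurd h.symm hll
      · rfl
      · exact absurd h.symm (hwl g' hg' g₂ hg₂)
      · exact absurd h (hwl g hg g₁ hg₁)
      · exact absurd h (hwl g hg g₂ hg₂)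
      · rw [hww g hg g' hg' h]
    · rcases (hmem e).1 he with rfl | rfl | ⟨g, hg, rfl⟩ <;>
        rcases (hmem e').1 he' with rfl | rfl | ⟨g', hg', rfl⟩
      · rfl
      · exact absurd h hcd
      · exact absurd h.symm (hGc g' hg')
      · exact absurd h.symm hcd
      · rfl
      · exact absurd h.symm (hGd g' hg')
      · exact absurd h (hGc g hg)
      · exact absurd h (hGd g hg)
      · have hgg' : g = g' := h
        rw [hgg']
  refine ⟨μ, chainInstance_satisfiesProp X hμ ?_ ?_ fun i => ?_, hμG⟩
  · exact mem_image.2 ⟨(lose g₁, c), (hmem _).2 (Or.inl rfl), rfl⟩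
  · exact mem_image.2 ⟨(lose g₂, d), (hmem _).2 (Or.inr (Or.inl rfl)), rfl⟩
  · exact mem_image.2 ⟨_, hμG _ (hgrp i), rfl⟩

/-- The adversary argument: if, for each `g ∈ S`, the thresholds of two agents of group `g`
do not separate `lo` from `hi`, then some profile gives the algorithm welfare at most
`2 + |S| * lo` while a matching with property `X` has welfare at least `|S| * hi`. -/
theorem exists_chainVal_welfare_gap (X : MatchProp) (hcd : c ≠ d)
    (hc : ∀ i, grp i ≠ c) (hd : ∀ i, grp i ≠ d) {G S : Finset (Fin n)} (hG : 1 < G.card)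
    (hSG : S ⊆ G) (hgrp : ∀ i, grp i ∈ G) {T : Fin n → Fin n → ℝ}
    {F : (Fin n → Fin n → Bool) → Finset (Fin n × Fin n)}
    (hF : ∀ v, (chainInstance c d grp).Consistent v → (chainInstance c d grp).UnitSum v →
      (chainInstance c d grp).IsMatching (F fun i j => decide (T i j ≤ v i j)))
    (ha : ∀ i, 5 / 8 ≤ a i ∧ a i ≤ 3 / 4) (haT : ∀ i, T i c ≤ a i - 1 / 8 ∨ a i < T i c)
    {p q : Fin n → Fin n} (hp : ∀ g ∈ G, grp (p g) = g) (hq : ∀ g ∈ G, grp (q g) = g)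
    (hpq : ∀ g ∈ G, p g ≠ q g) {lo hi : ℝ} (hlo : 0 ≤ lo) (hlohi : lo ≤ hi)
    (hhi : hi ≤ 1 / 8) (hTp : ∀ g ∈ S, T (p g) g ≤ lo ↔ T (p g) g ≤ hi)
    (hTq : ∀ g ∈ S, T (q g) g ≤ lo ↔ T (q g) g ≤ hi) :
    ∃ v, (chainInstance c d grp).Consistent v ∧ (chainInstance c d grp).UnitSum v ∧
      (chainInstance c d grp).SW v (F fun i j => decide (T i j ≤ v i j)) ≤ 2 + S.card * lo ∧
      ∃ μ, SatisfiesProp X (chainInstance c d grp) μ ∧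
        S.card * hi ≤ (chainInstance c d grp).SW v μ := by
  let x₀ : Fin n → ℝ := fun i =>
    if grp i ∈ S ∧ (i = p (grp i) ∨ i = q (grp i)) then lo else 0
  have hx₀ : ∀ i, 0 ≤ x₀ i ∧ x₀ i ≤ 1 / 8 := by
    intro i
    simp only [x₀]
    split_ifs <;> constructor <;> linarith
  set M := F fun i j => decide (T i j ≤ chainVal c d grp a x₀ i j) with hMdef
  have hM : (chainInstance c d grp).IsMatching M :=
    hF _ (chainVal_consistent hcd hc hd ha hx₀) (chainVal_unitSum hcd hc hd)
  let win : Fin n → Fin n := fun g => if (p g, g) ∈ M then q g else p g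
  let lose : Fin n → Fin n := fun g => if (p g, g) ∈ M then p g else q g
  have hwin : ∀ g ∈ G, grp (win g) = g := by
    intro g hg
    simp only [win]
    split_ifs
    exacts [hq g hg, hp g hg]
  have hlose : ∀ g ∈ G, grp (lose g) = g := by
    intro g hg
    simp only [lose]
    split_ifs
    exacts [hp g hg, hq g hg]
  have hne : ∀ g ∈ G, win g ≠ lose g := by
    intro g hg
    simp only [win, lose]
    split_ifs
    exacts [(hpq g hg).symm, hpq g hg]
  have hwinM : ∀ g ∈ G, (win g, g) ∉ M := by
    intro g hg hmem
    by_cases h : (p g, g) ∈ M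
    · simp only [win, h, if_true] at hmem
      exact hpq g hg (congrArg Prod.fst (hM.2.2 _ h _ hmem rfl))
    · simp only [win, h, if_false] at hmem
  have hTwin : ∀ g ∈ S, T (win g) g ≤ lo ↔ T (win g) g ≤ hi := by
    intro g hg
    simp only [win]
    split_ifs
    exacts [hTq g hg, hTp g hg]
  have hwin_or : ∀ g, win g = p g ∨ win g = q g := by
    intro g
    simp only [win]
    split_ifs <;> simp
  let x : Fin n → ℝ := fun i => if grp i ∈ S ∧ i = win (grp i) then hi else x₀ i
  have hx : ∀ i, 0 ≤ x i ∧ x i ≤ 1 / 8 := by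
    intro i
    simp only [x]
    split_ifs
    · exact ⟨hlo.trans hlohi, hhi⟩
    · exact hx₀ i
  have hxx₀ : ∀ i, T i (grp i) ≤ x i ↔ T i (grp i) ≤ x₀ i := by
    intro i
    by_cases h : grp i ∈ S ∧ i = win (grp i)
    · have hx₀i : x₀ i = lo := by
        simp only [x₀]
        rw [if_pos]
        refine ⟨h.1, ?_⟩
        rcases hwin_or (grp i) with h' | h'
        · exact Or.inl (h.2.trans h')
        · exact Or.inr (h.2.trans h')
      have hxi : x i = hi := if_pos h
      have := hTwin _ h.1
      rw [← h.2] at this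
      rw [hx₀i, hxi, this]
    · have hxi : x i = x₀ i := if_neg h
      rw [hxi]
  have hans : (F fun i j => decide (T i j ≤ chainVal c d grp a x i j)) = M := by
    rw [hMdef]
    congr 1
    funext i j
    exact decide_eq_decide.2 (threshold_chainVal_iff hx hx₀ haT hxx₀ i j)
  obtain ⟨μ, hμ, hμG⟩ :=
    exists_chainInstance_satisfiesProp X hcd hc hd hG hgrp hwin hlose hne
  have hcons := chainVal_consistent hcd hc hd ha hx
  refine ⟨chainVal c d grp a x, hcons, chainVal_unitSum hcd hc hd, ?_, μ, hμ, ?_⟩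
  · rw [hans]
    refine chainVal_SW_le hcd ha (fun i => (hx i).1) hM hlo fun i hi' => ?_
    have hxi : x i = x₀ i := by
      refine if_neg fun h => hwinM (grp i) (hSG h.1) ?_
      rw [← h.2]
      exact hi'
    rw [hxi]
    simp only [x₀]
    split_ifs with h₁ h₂ h₂
    · exact le_rfl
    · exact absurd h₁.1 h₂
    · exact hlo
    · exact le_rfl
  · have hinj : Set.InjOn (fun g => (win g, g)) (S : Set (Fin n)) :=
      fun g _ g' _ h => congrArg Prod.snd h
    have hsub : S.image (fun g => (win g, g)) ⊆ μ := by
      intro e he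
      obtain ⟨g, hg, rfl⟩ := mem_image.1 he
      exact hμG g (hSG hg)
    calc (S.card : ℝ) * hi = ∑ g ∈ S, chainVal c d grp a x (win g) g := by
          rw [← nsmul_eq_mul, ← sum_const]
          refine sum_congr rfl fun g hg => ?_
          have hwg := hwin g (hSG hg)
          have hgc : g ≠ c := hwg ▸ hc _
          have hgd : g ≠ d := hwg ▸ hd _
          simp [chainVal, hgc, hgd, hwg, x, hg]
      _ = ∑ e ∈ S.image (fun g => (win g, g)), chainVal c d grp a x e.1 e.2 :=
          (sum_image (f := fun e => chainVal c d grp a x e.1 e.2) hinj).symm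
      _ ≤ _ := sum_le_sum_of_subset_of_nonneg hsub fun e _ _ => (hcons.1 e.1 e.2).1

end OSMInstance

/-- Among three distinct elements, two agree on any given predicate. -/
theorem exists_pair_same_side {α : Type*} {a₁ a₂ a₃ : α} (h₁₂ : a₁ ≠ a₂) (h₁₃ : a₁ ≠ a₃)
    (h₂₃ : a₂ ≠ a₃) {Q : α → Prop} (hQ : Q a₁ ∧ Q a₂ ∧ Q a₃) (P : α → Prop) :
    ∃ p q, Q p ∧ Q q ∧ p ≠ q ∧ (P p ↔ P q) := by
  by_cases h₁ : P a₁ <;> by_cases h₂ : P a₂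
  · exact ⟨a₁, a₂, hQ.1, hQ.2.1, h₁₂, by simp [h₁, h₂]⟩
  · by_cases h₃ : P a₃
    · exact ⟨a₁, a₃, hQ.1, hQ.2.2, h₁₃, by simp [h₁, h₃]⟩
    · exact ⟨a₂, a₃, hQ.2.1, hQ.2.2, h₂₃, by simp [h₂, h₃]⟩
  · by_cases h₃ : P a₃
    · exact ⟨a₂, a₃, hQ.2.1, hQ.2.2, h₂₃, by simp [h₂, h₃]⟩
    · exact ⟨a₁, a₃, hQ.1, hQ.2.2, h₁₃, by simp [h₁, h₃]⟩
  · exact ⟨a₁, a₂, hQ.1, hQ.2.1, h₁₂, by simp [h₁, h₂]⟩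

/-- for `n ≥ 18`, every non-adaptive deterministic algorithm asking one
binary threshold query per (agent, object) pair that always outputs a matching
satisfying `X` loses a factor of at least `√n / 64` in welfare on some instance with
unit-sum valuations. -/
theorem nonadaptive_unitSum_lower_bound (X : MatchProp) (n : ℕ) (hn : 18 ≤ n)
    (T : OSMInstance n → Fin n → Fin n → ℝ)
    (hT : ∀ I i j, 0 ≤ T I i j ∧ T I i j ≤ 1)
    (f : OSMInstance n → (Fin n → Fin n → Bool) → Finset (Fin n × Fin n))
    (hf : ∀ I : OSMInstance n, ∀ v : Fin n → Fin n → ℝ,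
      I.Consistent v → I.UnitSum v →
        SatisfiesProp X I (f I (fun i j => decide (T I i j ≤ v i j)))) :
    ∃ I : OSMInstance n, ∃ v : Fin n → Fin n → ℝ,
      I.Consistent v ∧ I.UnitSum v ∧
      ∃ μ', SatisfiesProp X I μ' ∧
        Real.sqrt n / 64 *
          I.SW v (f I (fun i j => decide (T I i j ≤ v i j))) ≤ I.SW v μ' := by
  obtain ⟨m, hm6, hm3, hmn⟩ : ∃ m, 6 ≤ m ∧ 3 * m ≤ n ∧ n ≤ 3 * m + 2 :=
    ⟨n / 3, by omega, by omega, by omega⟩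
  have hmod : ∀ i : Fin n, (i : ℕ) % m < m := fun i => Nat.mod_lt _ (by omega)
  let c : Fin n := ⟨m, by omega⟩
  let d : Fin n := ⟨m + 1, by omega⟩
  let grp : Fin n → Fin n := fun i => ⟨i % m, by have := hmod i; omega⟩
  have hcd : c ≠ d := by simp [c, d]
  have hc : ∀ i, grp i ≠ c := fun i h => (hmod i).ne (congrArg Fin.val h)
  have hd : ∀ i, grp i ≠ d := fun i h => by
    have h₁ := hmod i
    have h₂ : (i : ℕ) % m = m + 1 := congrArg Fin.val h
    omega
  let G : Finset (Fin n) := univ.filter fun g => (g : ℕ) < m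
  have hGcard : G.card = m := by
    have : G = (univ : Finset (Fin m)).map (Fin.castLEEmb (by omega : m ≤ n)) := by
      ext g
      simp only [G, mem_filter, mem_univ, true_and, mem_map]
      constructor
      · exact fun h => ⟨⟨g, h⟩, rfl⟩
      · rintro ⟨g', rfl⟩
        exact g'.2
    rw [this, card_map, card_univ, Fintype.card_fin]
  have hgrp : ∀ i, grp i ∈ G := fun i => by simp [G, grp, hmod i]
  let I := OSMInstance.chainInstance c d grp
  let a : Fin n → ℝ := fun i => if T I i c ≤ 5 / 8 then 3 / 4 else 5 / 8
  have ha : ∀ i, 5 / 8 ≤ a i ∧ a i ≤ 3 / 4 := fun i => by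
    simp only [a]
    split_ifs <;> norm_num
  have haT : ∀ i, T I i c ≤ a i - 1 / 8 ∨ a i < T I i c := fun i => by
    by_cases h : T I i c ≤ 5 / 8
    · left
      simp only [a, h, if_true]
      linarith
    · right
      simp only [a, h, if_false]
      linarith
  have hsqrt : 0 ≤ Real.sqrt n := Real.sqrt_nonneg _
  by_cases hsmall : Real.sqrt n < 64
  · have hcons := OSMInstance.chainVal_consistent (x := fun _ => 0) hcd hc hd ha (by norm_num)
    have hunit := OSMInstance.chainVal_unitSum (a := a) (x := fun _ => 0) hcd hc hd
    refine ⟨I, _, hcons, hunit, _, hf I _ hcons hunit, ?_⟩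
    exact mul_le_of_le_one_left (sum_nonneg fun e _ => (hcons.1 e.1 e.2).1) (by linarith)
  set s := Real.sqrt n with hs
  have hs64 : 64 ≤ s := not_lt.1 hsmall
  have hss : s * s = n := Real.mul_self_sqrt (Nat.cast_nonneg n)
  have hspos : 0 < s := by linarith
  have hpair : ∀ g : Fin n, ∃ p q, g ∈ G → (grp p = g ∧ grp q = g ∧ p ≠ q ∧
      (T I p g ≤ 1 / s ↔ T I q g ≤ 1 / s)) := by
    intro g
    by_cases hg : g ∈ G
    · have hgm : (g : ℕ) < m := by simpa [G] using hg
      obtain ⟨p, q, hp, hq, hpq, hT'⟩ := exists_pair_same_side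
        (a₁ := g) (a₂ := ⟨g + m, by omega⟩) (a₃ := ⟨g + m + m, by omega⟩)
        (by rw [Ne, Fin.ext_iff]; simp; omega) (by rw [Ne, Fin.ext_iff]; simp; omega)
        (by rw [Ne, Fin.ext_iff]; simp; omega) (Q := fun i => grp i = g)
        (by simp [grp, Nat.mod_eq_of_lt hgm]) (fun i => T I i g ≤ 1 / s)
      exact ⟨p, q, fun _ => ⟨hp, hq, hpq, hT'⟩⟩
    · exact ⟨g, g, fun h => absurd h hg⟩
  choose p q hpair using hpair
  have hF : ∀ v, I.Consistent v → I.UnitSum v →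
      I.IsMatching (f I fun i j => decide (T I i j ≤ v i j)) :=
    fun v hv hv' => (hf I v hv hv').isMatching
  have hinv : 1 / s ≤ 1 / 8 := one_div_le_one_div_of_le (by norm_num) (by linarith)
  have hinv0 : 0 ≤ 1 / s := by positivity
  have hgap : ∀ S ⊆ G, ∀ lo hi : ℝ, 0 ≤ lo → lo ≤ hi → hi ≤ 1 / 8 →
      (∀ g ∈ S, T I (p g) g ≤ lo ↔ T I (p g) g ≤ hi) →
      (∀ g ∈ S, T I (q g) g ≤ lo ↔ T I (q g) g ≤ hi) →
      s / 64 * (2 + S.card * lo) ≤ S.card * hi →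
      ∃ I : OSMInstance n, ∃ v : Fin n → Fin n → ℝ, I.Consistent v ∧ I.UnitSum v ∧
        ∃ μ', SatisfiesProp X I μ' ∧
          s / 64 * I.SW v (f I (fun i j => decide (T I i j ≤ v i j))) ≤ I.SW v μ' := by
    intro S hSG lo hi hlo hlohi hhi hTp hTq hnum
    obtain ⟨v, hv, hv', hle, μ, hμ, hge⟩ := OSMInstance.exists_chainVal_welfare_gap X hcd hc hd
      (by omega : 1 < G.card) hSG hgrp hF ha haT (fun g hg => (hpair g hg).1)
      (fun g hg => (hpair g hg).2.1) (fun g hg => (hpair g hg).2.2.1) hlo hlohi hhi hTp hTq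
    exact ⟨I, v, hv, hv', μ, hμ,
      (mul_le_mul_of_nonneg_left hle (by positivity)).trans (hnum.trans hge)⟩
  have hmR : (n : ℝ) ≤ 3 * m + 2 := by exact_mod_cast hmn
  let S := G.filter fun g => T I (p g) g ≤ 1 / s
  let S' := G.filter fun g => ¬ T I (p g) g ≤ 1 / s
  have hSS' : (S.card : ℝ) + S'.card = m := by
    rw [← hGcard]
    exact_mod_cast card_filter_add_card_filter_not (s := G) fun g => T I (p g) g ≤ 1 / s
  by_cases hmaj : (m : ℝ) ≤ 2 * S.card
  · refine hgap S (filter_subset _ _) (1 / s) (1 / 8) hinv0 hinv le_rfl ?_ ?_ ?_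
    · intro g hg
      have := (mem_filter.1 hg).2
      exact iff_of_true this (this.trans hinv)
    · intro g hg
      have := (hpair g (mem_filter.1 hg).1).2.2.2.1 (mem_filter.1 hg).2
      exact iff_of_true this (this.trans hinv)
    · have : s / 64 * (2 + S.card * (1 / s)) = s / 32 + S.card / 64 := by
        field_simp
        ring
      rw [this]
      nlinarith
  · refine hgap S' (filter_subset _ _) 0 (1 / s) le_rfl hinv0 hinv ?_ ?_ ?_
    · intro g hg
      have := (mem_filter.1 hg).2
      exact iff_of_false (fun h => this (h.trans hinv0)) this
    · intro g hg
      have h₁ := (mem_filter.1 hg).2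
      have h₂ := (hpair g (mem_filter.1 hg).1).2.2.2
      exact iff_of_false (fun h => h₁ (h₂.2 (h.trans hinv0))) fun h => h₁ (h₂.2 h)
    · rw [mul_one_div, le_div_iff₀ hspos]
      nlinarith
end
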